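/- If A is a set of positive integers such that the series Σ_{n∈A} 1/n diverges (i.e. the partial sums Σ_{n∈A, n≤N} 1/n are unbounded as N → ∞), then A contains infinitely many non-trivial three-term arithmetic progressions; that is, the set of triples (x,y,z) ∈ A³ with x + y = 2z and x ≠ y is infinite. -/

import Mathlib

section
namespace KM
open Finset
open scoped Classical

section bohr
variable {G : Type*} [AddCommGroup G] [Fintype G]

/-- Bohr sets. -/
noncomputable def bohr (Γ : Finset (AddChar G ℂ)) (ρ : ℝ) : Finset G :=
  univ.filter (fun x => ∀ γ ∈ Γ, ‖1 - γ x‖ ≤ ρ)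

lemma mem_bohr {Γ : Finset (AddChar G ℂ)} {ρ : ℝ} {x : G} :
    x ∈ bohr Γ ρ ↔ ∀ γ ∈ Γ, ‖1 - γ x‖ ≤ ρ := by simp [bohr]

lemma bohr_mono {Γ : Finset (AddChar G ℂ)} {ρ σ : ℝ} (h : ρ ≤ σ) : bohr Γ ρ ⊆ bohr Γ σ := by
  intro x hx
  rw [mem_bohr] at *
  exact fun γ hγ => (hx γ hγ).trans h

lemma bohr_anti {Γ Γ' : Finset (AddChar G ℂ)} {ρ : ℝ} (h : Γ ⊆ Γ') : bohr Γ' ρ ⊆ bohr Γ ρ := by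
  intro x hx
  rw [mem_bohr] at *
  exact fun γ hγ => (hx γ (h hγ))

lemma norm_one_sub_add (γ : AddChar G ℂ) (x y : G) :
    ‖1 - γ (x + y)‖ ≤ ‖1 - γ x‖ + ‖1 - γ y‖ := by
  have : 1 - γ (x + y) = (1 - γ x) + γ x * (1 - γ y) := by
    rw [AddChar.map_add_eq_mul]; ring
  rw [this]
  refine (norm_add_le _ _).trans ?_
  rw [norm_mul, AddChar.norm_apply, one_mul]

lemma norm_one_sub_neg (γ : AddChar G ℂ) (x : G) : ‖1 - γ (-x)‖ = ‖1 - γ x‖ := by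
  have : 1 - γ (-x) = - (γ (-x) * (1 - γ x)) := by
    have h : γ (-x) * γ x = 1 := by rw [← AddChar.map_add_eq_mul]; simp
    linear_combination (-1 : ℂ) * h
  rw [this, norm_neg, norm_mul, AddChar.norm_apply, one_mul]

lemma bohr_add {Γ : Finset (AddChar G ℂ)} {ρ σ : ℝ} {x y : G} (hx : x ∈ bohr Γ ρ)
    (hy : y ∈ bohr Γ σ) : x + y ∈ bohr Γ (ρ + σ) := by
  rw [mem_bohr] at *
  exact fun γ hγ => (norm_one_sub_add γ x y).trans (add_le_add (hx γ hγ) (hy γ hγ))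

lemma bohr_neg {Γ : Finset (AddChar G ℂ)} {ρ : ℝ} {x : G} (hx : x ∈ bohr Γ ρ) :
    -x ∈ bohr Γ ρ := by
  rw [mem_bohr] at *
  exact fun γ hγ => (norm_one_sub_neg γ x).le.trans (hx γ hγ)

lemma bohr_sub {Γ : Finset (AddChar G ℂ)} {ρ σ : ℝ} {x y : G} (hx : x ∈ bohr Γ ρ)
    (hy : y ∈ bohr Γ σ) : x - y ∈ bohr Γ (ρ + σ) := by
  rw [sub_eq_add_neg]; exact bohr_add hx (bohr_neg hy)

lemma bohr_zero_mem {Γ : Finset (AddChar G ℂ)} {ρ : ℝ} (h : 0 ≤ ρ) : (0 : G) ∈ bohr Γ ρ := by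
  rw [mem_bohr]; intro γ _; simpa using h

lemma bohr_sum {Γ : Finset (AddChar G ℂ)} {ρ : ℝ} {ι : Type*} (s : Finset ι) (u : ι → G)
    (hu : ∀ i ∈ s, u i ∈ bohr Γ ρ) : ∑ i ∈ s, u i ∈ bohr Γ (s.card * ρ) := by
  induction s using Finset.induction_on with
  | empty => simpa using bohr_zero_mem (le_refl 0)
  | insert a s ha ih =>
    rw [sum_insert ha, card_insert_of_notMem ha]
    have := bohr_add (hu a (mem_insert_self _ _)) (ih fun i hi => hu i (mem_insert_of_mem hi))
    convert this using 2
    push_cast; ring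

lemma bohr_two (Γ : Finset (AddChar G ℂ)) : bohr Γ 2 = univ := by
  ext x
  simp only [mem_bohr, mem_univ, iff_true]
  intro γ _
  refine (norm_sub_le _ _).trans ?_
  rw [AddChar.norm_apply]; norm_num

lemma bohr_card_pos {Γ : Finset (AddChar G ℂ)} {ρ : ℝ} (h : 0 ≤ ρ) : 0 < (bohr Γ ρ).card :=
  card_pos.2 ⟨0, bohr_zero_mem h⟩

lemma bohr_double (Γ : Finset (AddChar G ℂ)) {d : ℕ} (hd : Γ.card ≤ d) {ρ : ℝ} (hρ : 0 < ρ) :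
    (bohr Γ (2 * ρ)).card ≤ 81 ^ d * (bohr Γ ρ).card := by
  -- cells
  let c : G → (Γ → ℤ × ℤ) := fun x γ =>
    (⌊((1 - γ.1 x).re) / (ρ / 2)⌋, ⌊((1 - γ.1 x).im) / (ρ / 2)⌋)
  let t : Finset (Γ → ℤ × ℤ) := Fintype.piFinset (fun _ => Finset.Icc (-4) 4 ×ˢ Finset.Icc (-4) 4)
  have ht : t.card ≤ 81 ^ d := by
    simp only [t, Fintype.card_piFinset, card_product, Int.card_Icc]
    simp only [prod_const, card_univ, Fintype.card_coe]
    norm_num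
    exact Nat.pow_le_pow_right (by norm_num) hd
  have hfl : ∀ y : ℝ, |y| ≤ 2 * ρ → -4 ≤ ⌊y / (ρ / 2)⌋ ∧ ⌊y / (ρ / 2)⌋ ≤ 4 := by
    intro y hy
    rw [abs_le] at hy
    constructor
    · rw [Int.le_floor, le_div_iff₀ (by positivity)]; push_cast; linarith
    · have : ⌊y / (ρ / 2)⌋ < 5 := by
        rw [Int.floor_lt, div_lt_iff₀ (by positivity)]; push_cast; linarith
      omega
  have hmaps : ∀ x ∈ bohr Γ (2 * ρ), c x ∈ t := by
    intro x hx
    rw [mem_bohr] at hx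
    simp only [t, c, Fintype.mem_piFinset, mem_product, Finset.mem_Icc]
    intro γ
    exact ⟨hfl _ ((Complex.abs_re_le_norm _).trans (hx γ.1 γ.2)),
      hfl _ ((Complex.abs_im_le_norm _).trans (hx γ.1 γ.2))⟩
  refine (card_le_mul_card_image_of_maps_to hmaps (bohr Γ ρ).card ?_).trans
    ((mul_comm _ _).le.trans (Nat.mul_le_mul_right _ ht))
  intro b _
  rcases (filter (fun a => c a = b) (bohr Γ (2 * ρ))).eq_empty_or_nonempty with h | ⟨x0, hx0⟩
  · rw [h]; simp
  refine card_le_card_of_injOn (fun x => x - x0) ?_ (fun x _ y _ h => by simpa using h)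
  intro x hx
  simp only [mem_coe, mem_filter] at hx hx0
  simp only [mem_coe, mem_bohr]
  intro γ hγ
  have e1 : c x ⟨γ, hγ⟩ = c x0 ⟨γ, hγ⟩ := by rw [hx.2, hx0.2]
  simp only [c, Prod.mk.injEq] at e1
  have key : ∀ u v : ℝ, ⌊u / (ρ / 2)⌋ = ⌊v / (ρ / 2)⌋ → |u - v| ≤ ρ / 2 := by
    intro u v h
    have := Int.abs_sub_lt_one_of_floor_eq_floor h
    rw [← sub_div, abs_div, abs_of_pos (show 0 < ρ / 2 by positivity),
      div_lt_one (by positivity)] at this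
    exact this.le
  have h1 := key _ _ e1.1
  have h2 := key _ _ e1.2
  have e2 : ‖1 - γ (x - x0)‖ = ‖(1 - γ x) - (1 - γ x0)‖ := by
    have h : γ x = γ (x - x0) * γ x0 := by rw [← AddChar.map_add_eq_mul]; simp
    have : (1 - γ x) - (1 - γ x0) = γ x0 * (1 - γ (x - x0)) := by rw [h]; ring
    rw [this, norm_mul, AddChar.norm_apply, one_mul]
  rw [e2]
  refine (Complex.norm_le_abs_re_add_abs_im _).trans ?_
  rw [Complex.sub_re, Complex.sub_im]
  linarith

lemma bohr_card_lower (Γ : Finset (AddChar G ℂ)) {d : ℕ} (hd : Γ.card ≤ d) (j : ℕ) :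
    Fintype.card G ≤ 81 ^ (d * j) * (bohr Γ (2 / 2 ^ j)).card := by
  induction j with
  | zero => simp [bohr_two]
  | succ j ih =>
    refine ih.trans ?_
    have := bohr_double Γ hd (ρ := 2 / 2 ^ (j + 1)) (by positivity)
    have e : (2 : ℝ) * (2 / 2 ^ (j + 1)) = 2 / 2 ^ j := by rw [pow_succ]; field_simp
    rw [e] at this
    calc _ ≤ 81 ^ (d * j) * (81 ^ d * (bohr Γ (2 / 2 ^ (j + 1))).card) := Nat.mul_le_mul_left _ this
      _ = _ := by rw [Nat.mul_succ, pow_add]; ring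

lemma exists_regular (Γ : Finset (AddChar G ℂ)) {d m : ℕ} (hd : Γ.card ≤ d) (hd1 : 1 ≤ d)
    (hm : 1 ≤ m) {ρ₀ : ℝ} (hρ : 0 < ρ₀) :
    ∃ ρ : ℝ, ρ₀ / 2 ≤ ρ ∧ ρ ≤ ρ₀ ∧ ρ₀ / (28 * d * m) ≤ ρ ∧
      ((bohr Γ (ρ + ρ₀ / (28 * d * m))).card : ℝ) ≤
        (1 + 1 / m) * (bohr Γ (ρ - ρ₀ / (28 * d * m))).card := by
  by_contra hcon
  push Not at hcon
  set κ : ℝ := ρ₀ / (28 * d * m) with hκ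
  have hd' : (1 : ℝ) ≤ d := by exact_mod_cast hd1
  have hm' : (1 : ℝ) ≤ m := by exact_mod_cast hm
  have hκ0 : 0 < κ := by positivity
  have hκn : κ * (28 * d * m) = ρ₀ := by rw [hκ]; field_simp
  have hdm : (1 : ℝ) ≤ d * m := by nlinarith
  have step : ∀ j : ℕ, j ≤ 7 * d * m →
      (1 + 1 / (m : ℝ)) ^ j * (bohr Γ (ρ₀ / 2)).card ≤ (bohr Γ (ρ₀ / 2 + 2 * j * κ)).card := by
    intro j
    induction j with
    | zero => simp
    | succ j ih =>
      intro hj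
      have hj' : (j : ℝ) + 1 ≤ 7 * d * m := by exact_mod_cast hj
      have h1 := ih (by omega)
      have hjk : ((j : ℝ) + 1) * κ ≤ 7 * d * m * κ := by gcongr
      have hj0 : (0 : ℝ) ≤ j * κ := by positivity
      have h2 := hcon (ρ₀ / 2 + (2 * j + 1) * κ) (by nlinarith) (by nlinarith) (by nlinarith)
      have e1 : ρ₀ / 2 + (2 * j + 1) * κ - κ = ρ₀ / 2 + 2 * j * κ := by ring
      have e2 : ρ₀ / 2 + (2 * j + 1) * κ + κ = ρ₀ / 2 + 2 * (j + 1 : ℕ) * κ := by push_cast; ring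
      rw [e1, e2] at h2
      calc _ = (1 + 1 / (m : ℝ)) * ((1 + 1 / (m : ℝ)) ^ j * (bohr Γ (ρ₀ / 2)).card) := by
            rw [pow_succ]; ring
        _ ≤ (1 + 1 / (m : ℝ)) * (bohr Γ (ρ₀ / 2 + 2 * j * κ)).card := by gcongr
        _ ≤ _ := h2.le
  have h := step _ le_rfl
  have e : ρ₀ / 2 + 2 * (7 * d * m : ℕ) * κ = ρ₀ := by push_cast; nlinarith
  rw [e] at h
  have hdb := bohr_double Γ hd (ρ := ρ₀ / 2) (by positivity)
  rw [show 2 * (ρ₀ / 2) = ρ₀ by ring] at hdb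
  have hdb' : ((bohr Γ ρ₀).card : ℝ) ≤ 81 ^ d * (bohr Γ (ρ₀ / 2)).card := by exact_mod_cast hdb
  have hpos : (0 : ℝ) < (bohr Γ (ρ₀ / 2)).card := by
    exact_mod_cast bohr_card_pos (by positivity)
  have h3 : (1 + 1 / (m : ℝ)) ^ (7 * d * m) ≤ 81 ^ d := le_of_mul_le_mul_right (h.trans hdb') hpos
  have h4 : (2 : ℝ) ≤ (1 + 1 / (m : ℝ)) ^ m := by
    have := one_add_mul_le_pow (a := 1 / (m : ℝ)) (by have : 0 < 1 / (m : ℝ) := by positivity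
                                                      linarith) m
    have e : 1 + (m : ℝ) * (1 / m) = 2 := by field_simp; norm_num
    linarith
  have h5 : (128 : ℝ) ^ d ≤ (1 + 1 / (m : ℝ)) ^ (7 * d * m) := by
    rw [show 7 * d * m = m * (7 * d) by ring, pow_mul, show (128 : ℝ) = 2 ^ 7 by norm_num, ← pow_mul]
    gcongr
  have h6 : (81 : ℝ) ^ d < 128 ^ d := pow_lt_pow_left₀ (by norm_num) (by norm_num) (by omega)
  linarith

end bohr
end KM
end

section
namespace KM
open Finset
open scoped Classical

set_option linter.unusedSectionVars false

lemma exists_pos_of_sum_pos {ι : Type*} {s : Finset ι} {f : ι → ℝ} (h : 0 < ∑ i ∈ s, f i) :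
    ∃ i ∈ s, 0 < f i := by
  by_contra hc
  push Not at hc
  exact absurd h (not_lt.2 (sum_nonpos hc))

section moments
variable {G : Type*} [AddCommGroup G] [Fintype G]

/-- Autocorrelation. -/
noncomputable def corr (f : G → ℝ) (u : G) : ℝ := ∑ y, f y * f (y + u)
/-- Self-convolution. -/
noncomputable def cnv (f : G → ℝ) (u : G) : ℝ := ∑ y, f y * f (u - y)
/-- Indicator. -/
noncomputable def ind (A : Finset G) (x : G) : ℝ := if x ∈ A then 1 else 0

lemma corr_sub (f : G → ℝ) (b b' : G) : corr f (b - b') = ∑ y, f (y + b') * f (y + b) := by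
  unfold corr
  refine (Fintype.sum_equiv (Equiv.addRight b') _ _ ?_).symm
  intro y
  simp only [Equiv.coe_addRight]
  congr 2; abel

lemma corr_sub_pow (f : G → ℝ) (b b' : G) (k : ℕ) :
    corr f (b - b') ^ k = ∑ y : Fin k → G, (∏ i, f (y i + b')) * ∏ i, f (y i + b) := by
  rw [corr_sub, Fintype.sum_pow]
  simp only [prod_mul_distrib]

lemma moment_eq (D : Finset G) (f : G → ℝ) (k : ℕ) :
    ∑ b ∈ D, ∑ b' ∈ D, corr f (b - b') ^ k =
      ∑ y : Fin k → G, (∑ b ∈ D, ∏ i, f (y i + b)) ^ 2 := by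
  simp only [corr_sub_pow, sq, sum_mul_sum]
  rw [sum_comm]
  have : ∀ b' ∈ D, ∑ b ∈ D, ∑ y : Fin k → G, (∏ i, f (y i + b')) * ∏ i, f (y i + b)
      = ∑ y : Fin k → G, ∑ b ∈ D, (∏ i, f (y i + b')) * ∏ i, f (y i + b) := fun _ _ => sum_comm
  rw [sum_congr rfl this, sum_comm]

lemma moment_nonneg (D : Finset G) (f : G → ℝ) (k : ℕ) :
    0 ≤ ∑ b ∈ D, ∑ b' ∈ D, corr f (b - b') ^ k := by
  rw [moment_eq]; positivity

lemma cnv_moment_le (D : Finset G) (f : G → ℝ) (k : ℕ) (t : G) :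
    ∑ b ∈ D, ∑ b' ∈ D, cnv f (t + b - b') ^ k ≤ ∑ b ∈ D, ∑ b' ∈ D, corr f (b - b') ^ k := by
  have e1 : ∀ b b', cnv f (t + b - b') = ∑ y, f (y + b) * f (t - (y + b')) := by
    intro b b'
    unfold cnv
    refine (Fintype.sum_equiv (Equiv.addRight b) _ _ ?_).symm
    intro y
    simp only [Equiv.coe_addRight]
    congr 2; abel
  have e2 : ∀ u, corr (fun x => f (t - x)) u = corr f u := by
    intro u
    unfold corr
    refine Fintype.sum_equiv (Equiv.subLeft (t - u)) _ _ ?_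
    intro y
    simp only [Equiv.subLeft_apply]
    rw [mul_comm]
    congr 2 <;> abel
  have e3 : ∑ b ∈ D, ∑ b' ∈ D, cnv f (t + b - b') ^ k =
      ∑ y : Fin k → G, (∑ b ∈ D, ∏ i, f (y i + b)) * (∑ b' ∈ D, ∏ i, f (t - (y i + b'))) := by
    simp only [e1, Fintype.sum_pow, prod_mul_distrib, sum_mul_sum]
    have : ∀ b ∈ D, ∑ b' ∈ D, ∑ y : Fin k → G, (∏ i, f (y i + b)) * ∏ i, f (t - (y i + b'))
      = ∑ y : Fin k → G, ∑ b' ∈ D, (∏ i, f (y i + b)) * ∏ i, f (t - (y i + b')) :=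
        fun _ _ => sum_comm
    rw [sum_congr rfl this, sum_comm]
  have m1 := moment_eq D f k
  have m2 := moment_eq D (fun x => f (t - x)) k
  simp only [e2] at m2
  rw [e3]
  have : ∑ y : Fin k → G, (∑ b ∈ D, ∏ i, f (y i + b)) * (∑ b' ∈ D, ∏ i, f (t - (y i + b'))) ≤
      ∑ y : Fin k → G, ((∑ b ∈ D, ∏ i, f (y i + b)) ^ 2 / 2 +
        (∑ b' ∈ D, ∏ i, f (t - (y i + b'))) ^ 2 / 2) := by
    refine sum_le_sum fun y _ => ?_
    nlinarith [sq_nonneg ((∑ b ∈ D, ∏ i, f (y i + b)) - (∑ b' ∈ D, ∏ i, f (t - (y i + b'))))]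
  refine this.trans ?_
  rw [sum_add_distrib, ← sum_div, ← sum_div, ← m1, ← m2]
  linarith

lemma unbalance {ι : Type*} (Q : Finset ι) (X Y : ι → ℝ) (p q : ℕ) (hpe : Even p) (hp4 : 4 ≤ p)
    (hq : p + 1 ≤ q) (hodd : 0 ≤ ∑ i ∈ Q, X i ^ (p + 1))
    (hp : (Q.card : ℝ) * (1 / 8) ^ p ≤ ∑ i ∈ Q, X i ^ p) (hY : ∀ i ∈ Q, 0 ≤ Y i)
    (hXY : ∀ i ∈ Q, |Y i - 1 - X i| ≤ 1 / 100) :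
    (Q.card : ℝ) * (67 / 64) ^ (q - (p + 1)) * (1 / 8) ^ (p + 1) / 16 ≤ ∑ i ∈ Q, Y i ^ q := by
  have pt : ∀ i ∈ Q, (67 / 64 : ℝ) ^ (q - (p + 1)) * (1 / 2 * X i ^ (p + 1) + 1 / 32 * X i ^ p
      - 3 / 2 * (1 / 16) ^ (p + 1)) ≤ Y i ^ q := by
    intro i hi
    have h1 := abs_le.1 (hXY i hi)
    have h2 := hY i hi
    by_cases hX : 1 / 16 ≤ X i
    · have e : Y i ^ q = Y i ^ (q - (p + 1)) * Y i ^ (p + 1) := by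
        rw [← pow_add]; congr 1; omega
      rw [e]
      have h3 : (67 / 64 : ℝ) ≤ Y i := by linarith
      have h4 : X i ≤ Y i := by linarith
      have h5 : (67 / 64 : ℝ) ^ (q - (p + 1)) ≤ Y i ^ (q - (p + 1)) := by gcongr
      have h6 : X i ^ (p + 1) ≤ Y i ^ (p + 1) := pow_le_pow_left₀ (by linarith) h4 _
      have h7 : 1 / 16 * X i ^ p ≤ X i ^ (p + 1) := by
        rw [pow_succ, mul_comm]
        exact mul_le_mul_of_nonneg_left hX (pow_nonneg (by linarith) _)
      have h8 : (0 : ℝ) ≤ (1 / 16) ^ (p + 1) := by positivity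
      calc _ ≤ (67 / 64 : ℝ) ^ (q - (p + 1)) * X i ^ (p + 1) := by
            apply mul_le_mul_of_nonneg_left _ (by positivity); linarith
        _ ≤ _ := mul_le_mul h5 h6 (pow_nonneg (by linarith) _) (pow_nonneg h2 _)
    · push Not at hX
      have hneg : 1 / 2 * X i ^ (p + 1) + 1 / 32 * X i ^ p - 3 / 2 * (1 / 16) ^ (p + 1) ≤ 0 := by
        have e : 1 / 2 * X i ^ (p + 1) + 1 / 32 * X i ^ p = 1 / 2 * (X i ^ p * (X i + 1 / 16)) := by
          rw [pow_succ]; ring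
        rw [e]
        have hp0 : 0 ≤ X i ^ p := hpe.pow_nonneg _
        have h8 : (0 : ℝ) ≤ (1 / 16) ^ (p + 1) := by positivity
        by_cases hX2 : X i ≤ -(1 / 16)
        · nlinarith
        · push Not at hX2
          have h9 : X i ^ p ≤ (1 / 16) ^ p := by
            rw [← hpe.pow_abs]
            exact pow_le_pow_left₀ (abs_nonneg _) (abs_le.2 ⟨by linarith, by linarith⟩) _
          have h10 : X i ^ p * (X i + 1 / 16) ≤ (1 / 16) ^ p * (1 / 8) :=
            mul_le_mul h9 (by linarith) (by linarith) (by positivity)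
          rw [pow_succ] at h8 ⊢
          linarith
      calc _ ≤ (0 : ℝ) := mul_nonpos_of_nonneg_of_nonpos (by positivity) hneg
        _ ≤ _ := pow_nonneg h2 _
  refine le_trans ?_ (sum_le_sum pt)
  rw [← mul_sum, sum_sub_distrib, sum_add_distrib, ← mul_sum, ← mul_sum, sum_const, nsmul_eq_mul]
  have h1 : (1 / 16 : ℝ) ^ (p + 1) ≤ (1 / 8) ^ (p + 1) / 32 := by
    have : (1 / 16 : ℝ) ^ (p + 1) = (1 / 8) ^ (p + 1) * (1 / 2) ^ (p + 1) := by
      rw [← mul_pow]; norm_num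
    rw [this]
    have h2 : (1 / 2 : ℝ) ^ (p + 1) ≤ (1 / 2) ^ 5 :=
      pow_le_pow_of_le_one (by norm_num) (by norm_num) (by omega)
    have h3 : (0 : ℝ) ≤ (1 / 8) ^ (p + 1) := by positivity
    nlinarith
  have h3 : (Q.card : ℝ) * (1 / 16) ^ (p + 1) ≤ Q.card * ((1 / 8) ^ (p + 1) / 32) := by gcongr
  have h4 : (1 / 8 : ℝ) ^ (p + 1) = (1 / 8) ^ p * (1 / 8) := pow_succ _ _
  have h5 : (0 : ℝ) ≤ Q.card * (1 / 8) ^ p := by positivity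
  have : (Q.card : ℝ) * (1 / 8) ^ (p + 1) / 16 ≤ 1 / 2 * ∑ i ∈ Q, X i ^ (p + 1)
      + 1 / 32 * ∑ i ∈ Q, X i ^ p - Q.card * (3 / 2 * (1 / 16) ^ (p + 1)) := by
    rw [h4] at h3 ⊢
    nlinarith
  calc _ = (67 / 64 : ℝ) ^ (q - (p + 1)) * ((Q.card : ℝ) * (1 / 8) ^ (p + 1) / 16) := by ring
    _ ≤ _ := by gcongr

lemma prod_ind (A : Finset G) (b : G) {k : ℕ} (s : Fin k → G) :
    ∏ i, ind A (s i + b) = if ∀ i, s i + b ∈ A then 1 else 0 := by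
  unfold ind
  split_ifs with h
  · exact prod_eq_one fun i _ => by simp [h i]
  · push Not at h
    obtain ⟨i, hi⟩ := h
    exact prod_eq_zero (mem_univ i) (by simp [hi])

lemma ind_nonneg (A : Finset G) (x : G) : 0 ≤ ind A x := by unfold ind; split_ifs <;> norm_num
lemma sum_ind (A : Finset G) : ∑ x, ind A x = A.card := by simp [ind]

lemma corr_ind_nonneg (A : Finset G) (u : G) : 0 ≤ corr (ind A) u :=
  sum_nonneg fun _ _ => mul_nonneg (ind_nonneg _ _) (ind_nonneg _ _)

lemma sift (A D : Finset G) (S : G → Prop) (c η : ℝ) (q : ℕ) (hc : 0 ≤ c) (hη : 0 ≤ η)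
    (hS : ∀ u, ¬ S u → corr (ind A) u ≤ c)
    (h1 : 2000 * ((D.card : ℝ) ^ 2 * c ^ q) ≤ ∑ b ∈ D, ∑ b' ∈ D, corr (ind A) (b - b') ^ q)
    (h2 : 2 * (η * D.card ^ 2 * A.card ^ q) < ∑ b ∈ D, ∑ b' ∈ D, corr (ind A) (b - b') ^ q) :
    ∃ A' ⊆ D, A'.Nonempty ∧ η * D.card ≤ A'.card ∧
      1000 * (∑ a ∈ A', ∑ a' ∈ A', if S (a - a') then 0 else (1 : ℝ)) ≤ (A'.card : ℝ) ^ 2 := by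
  set M := ∑ b ∈ D, ∑ b' ∈ D, corr (ind A) (b - b') ^ q with hM
  let As : (Fin q → G) → Finset G := fun s => D.filter (fun b => ∀ i, s i + b ∈ A)
  have hAs : ∀ s, ((As s).card : ℝ) = ∑ b ∈ D, ∏ i, ind A (s i + b) := by
    intro s; simp only [prod_ind, As]; simp
  have c1 : ∑ s, ((As s).card : ℝ) ^ 2 = M := by
    rw [hM, moment_eq]; simp only [hAs]
  have c2 : ∑ s, ((As s).card : ℝ) = D.card * A.card ^ q := by
    simp only [hAs]
    rw [sum_comm]
    have : ∀ b ∈ D, ∑ s : Fin q → G, ∏ i, ind A (s i + b) = (A.card : ℝ) ^ q := by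
      intro b _
      have := Fintype.sum_pow (fun x => ind A (x + b)) q
      rw [← this]
      congr 1
      rw [← sum_ind]
      exact Fintype.sum_equiv (Equiv.addRight b) _ _ (fun _ => rfl)
    rw [sum_congr rfl this]; simp
  have hbad : ∀ s, (∑ a ∈ As s, ∑ a' ∈ As s, if S (a - a') then 0 else (1 : ℝ)) =
      ∑ b ∈ D, ∑ b' ∈ D, (if S (b - b') then 0 else (1 : ℝ)) *
        ((∏ i, ind A (s i + b')) * ∏ i, ind A (s i + b)) := by
    intro s
    simp only [As, sum_filter]
    refine sum_congr rfl fun b _ => ?_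
    simp only [prod_ind]
    split_ifs with h
    · refine sum_congr rfl fun b' _ => ?_
      split_ifs <;> simp
    · simp
  have c3 : ∑ s, (∑ a ∈ As s, ∑ a' ∈ As s, if S (a - a') then 0 else (1 : ℝ)) ≤
      (D.card : ℝ) ^ 2 * c ^ q := by
    simp only [hbad]
    rw [sum_comm]
    have : ∀ b ∈ D, ∑ s : Fin q → G, ∑ b' ∈ D, (if S (b - b') then 0 else (1 : ℝ)) *
        ((∏ i, ind A (s i + b')) * ∏ i, ind A (s i + b)) ≤ D.card * c ^ q := by
      intro b _
      rw [sum_comm]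
      have h3 : ∀ b' ∈ D, ∑ s : Fin q → G, (if S (b - b') then 0 else (1 : ℝ)) *
        ((∏ i, ind A (s i + b')) * ∏ i, ind A (s i + b)) ≤ c ^ q := by
        intro b' _
        rw [← mul_sum, ← corr_sub_pow]
        split_ifs with h
        · rw [zero_mul]; positivity
        · rw [one_mul]; exact pow_le_pow_left₀ (corr_ind_nonneg _ _) (hS _ h) _
      refine (sum_le_sum h3).trans ?_
      simp
    refine (sum_le_sum this).trans ?_
    rw [sum_const, nsmul_eq_mul]; apply le_of_eq; ring
  have hpos : 0 < ∑ s, (((As s).card : ℝ) ^ 2 -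
      1000 * (∑ a ∈ As s, ∑ a' ∈ As s, if S (a - a') then 0 else (1 : ℝ))
      - η * D.card * (As s).card) := by
    rw [sum_sub_distrib, sum_sub_distrib, ← mul_sum, ← mul_sum, c1, c2]
    nlinarith
  obtain ⟨s, _, hs⟩ := exists_pos_of_sum_pos hpos
  have hb0 : 0 ≤ ∑ a ∈ As s, ∑ a' ∈ As s, if S (a - a') then 0 else (1 : ℝ) :=
    sum_nonneg fun _ _ => sum_nonneg fun _ _ => by split_ifs <;> norm_num
  have hne : (As s).Nonempty := by
    by_contra hne
    rw [not_nonempty_iff_eq_empty] at hne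
    rw [hne] at hs; simp at hs
  have hcp : (0 : ℝ) < (As s).card := by exact_mod_cast card_pos.2 hne
  have h0 : 0 ≤ η * D.card * (As s).card := by positivity
  refine ⟨As s, filter_subset _ _, hne, ?_, by linarith⟩
  have : η * D.card * (As s).card < (As s).card * (As s).card := by nlinarith
  exact (lt_of_mul_lt_mul_right this hcp.le).le

end moments
end KM
end

section
namespace KM
open Finset
open scoped Classical
set_option linter.unusedSectionVars false

lemma hoeffding {ι : Type*} (A : Finset ι) (Z : ι → ℝ) (hZ : ∀ a ∈ A, |Z a| ≤ 1)
    (hs : ∑ a ∈ A, Z a = 0) (k : ℕ) (δ : ℝ) (hδ : 0 < δ) (hδ1 : δ ≤ 1) :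
    (((Fintype.piFinset (fun _ : Fin k => A)).filter (fun a => k * δ < ∑ i, Z (a i))).card : ℝ) ≤
      Real.exp (-(k * δ ^ 2 / 4)) * (A.card : ℝ) ^ k := by
  have h1 : ∑ a ∈ Fintype.piFinset (fun _ : Fin k => A), Real.exp (δ / 2 * ∑ i, Z (a i)) =
      (∑ a ∈ A, Real.exp (δ / 2 * Z a)) ^ k := by
    rw [Finset.sum_pow']
    refine sum_congr rfl fun a _ => ?_
    rw [mul_sum, Real.exp_sum]
  have h2 : ∑ a ∈ A, Real.exp (δ / 2 * Z a) ≤ A.card * Real.exp (δ ^ 2 / 4) := by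
    have : ∀ a ∈ A, Real.exp (δ / 2 * Z a) ≤ 1 + δ ^ 2 / 4 + δ / 2 * Z a := by
      intro a ha
      have hz := hZ a ha
      have hb : |δ / 2 * Z a| ≤ 1 := by
        rw [abs_mul, abs_of_pos (by positivity : 0 < δ / 2)]
        nlinarith [abs_nonneg (Z a)]
      have := (abs_le.1 (Real.abs_exp_sub_one_sub_id_le hb)).2
      have hz2 : Z a ^ 2 ≤ 1 := by rw [← sq_abs]; nlinarith [abs_nonneg (Z a)]
      have : (δ / 2 * Z a) ^ 2 ≤ δ ^ 2 / 4 := by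
        have : (δ / 2 * Z a) ^ 2 = δ ^ 2 / 4 * Z a ^ 2 := by ring
        rw [this]; nlinarith [sq_nonneg δ]
      linarith
    refine (sum_le_sum this).trans ?_
    rw [sum_add_distrib, ← mul_sum, hs, sum_const, nsmul_eq_mul]
    have := Real.add_one_le_exp (δ ^ 2 / 4)
    rw [mul_zero, add_zero]
    gcongr; linarith
  have h3 : (((Fintype.piFinset (fun _ : Fin k => A)).filter
      (fun a => k * δ < ∑ i, Z (a i))).card : ℝ) * Real.exp (k * δ ^ 2 / 2) ≤
      ∑ a ∈ Fintype.piFinset (fun _ : Fin k => A), Real.exp (δ / 2 * ∑ i, Z (a i)) := by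
    rw [← nsmul_eq_mul, ← sum_const]
    refine (sum_le_sum (f := fun _ => Real.exp (k * δ ^ 2 / 2))
      (g := fun a => Real.exp (δ / 2 * ∑ i, Z (a i))) ?_).trans
      (sum_le_sum_of_subset_of_nonneg (filter_subset _ _) fun _ _ _ => (Real.exp_pos _).le)
    intro a ha
    rw [mem_filter] at ha
    apply Real.exp_le_exp.2
    nlinarith [ha.2]
  have h4 : (∑ a ∈ A, Real.exp (δ / 2 * Z a)) ^ k ≤ (A.card : ℝ) ^ k * Real.exp (k * δ ^ 2 / 4) := by
    refine (pow_le_pow_left₀ (sum_nonneg fun _ _ => (Real.exp_pos _).le) h2 k).trans ?_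
    rw [mul_pow, ← Real.exp_nat_mul, mul_div_assoc]
  have h5 := (h3.trans_eq h1).trans h4
  have e1 : Real.exp (-(k * δ ^ 2 / 4)) = Real.exp (k * δ ^ 2 / 4) / Real.exp (k * δ ^ 2 / 2) := by
    rw [← Real.exp_sub]; congr 1; ring
  rw [e1, div_mul_eq_mul_div, le_div_iff₀ (Real.exp_pos _)]
  linarith

lemma hoeffding2 {ι : Type*} (A : Finset ι) (Z : ι → ℝ) (hZ : ∀ a ∈ A, |Z a| ≤ 1)
    (hs : ∑ a ∈ A, Z a = 0) (k : ℕ) (δ : ℝ) (hδ : 0 < δ) (hδ1 : δ ≤ 1) :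
    (((Fintype.piFinset (fun _ : Fin k => A)).filter (fun a => k * δ < |∑ i, Z (a i)|)).card : ℝ) ≤
      2 * Real.exp (-(k * δ ^ 2 / 4)) * (A.card : ℝ) ^ k := by
  have h1 := hoeffding A Z hZ hs k δ hδ hδ1
  have h2 := hoeffding A (fun a => - Z a) (by simpa using hZ) (by simp [hs]) k δ hδ hδ1
  have : (Fintype.piFinset (fun _ : Fin k => A)).filter (fun a => k * δ < |∑ i, Z (a i)|) ⊆
    (Fintype.piFinset (fun _ : Fin k => A)).filter (fun a => k * δ < ∑ i, Z (a i)) ∪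
    (Fintype.piFinset (fun _ : Fin k => A)).filter (fun a => k * δ < ∑ i, - Z (a i)) := by
    intro a ha
    rw [mem_union, mem_filter, mem_filter]
    rw [mem_filter] at ha
    rcases lt_abs.1 ha.2 with h | h
    · exact Or.inl ⟨ha.1, h⟩
    · exact Or.inr ⟨ha.1, by simpa using h⟩
  have h3 := (card_le_card this).trans (card_union_le _ _)
  have h3' : (((Fintype.piFinset (fun _ : Fin k => A)).filter
    (fun a => k * δ < |∑ i, Z (a i)|)).card : ℝ) ≤
    (((Fintype.piFinset (fun _ : Fin k => A)).filter (fun a => k * δ < ∑ i, Z (a i))).card : ℝ) +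
    (((Fintype.piFinset (fun _ : Fin k => A)).filter (fun a => k * δ < ∑ i, - Z (a i))).card : ℝ) := by
    exact_mod_cast h3
  linarith

section cs
variable {G : Type*} [AddCommGroup G] [Fintype G]

/-- Indicator of a predicate. -/
noncomputable def pind (S : G → Prop) (x : G) : ℝ := if S x then 1 else 0

/-- Local density of `S` with respect to `x - A`. -/
noncomputable def dens (A : Finset G) (S : G → Prop) (x : G) : ℝ :=
  (∑ a ∈ A, pind S (x - a)) / A.card

lemma pind_nonneg (S : G → Prop) (x : G) : 0 ≤ pind S x := by unfold pind; split_ifs <;> norm_num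
lemma pind_le (S : G → Prop) (x : G) : pind S x ≤ 1 := by unfold pind; split_ifs <;> norm_num
lemma dens_nonneg (A : Finset G) (S : G → Prop) (x : G) : 0 ≤ dens A S x :=
  div_nonneg (sum_nonneg fun _ _ => pind_nonneg _ _) (by positivity)
lemma dens_le (A : Finset G) (S : G → Prop) (x : G) : dens A S x ≤ 1 := by
  unfold dens
  refine div_le_one_of_le₀ ?_ (by positivity)
  refine (sum_le_sum fun a _ => pind_le S (x - a)).trans ?_
  simp

lemma croot_sisask (A X D : Finset G) (S : G → Prop) (k : ℕ) (hk : 0 < k) (K δ β : ℝ) (hK : 0 < K)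
    (hA : A.Nonempty) (hD : D.Nonempty) (hXA : (X.card : ℝ) ≤ K * A.card) (hδ : 0 < δ) (hδ1 : δ ≤ 1) (hβ : 0 < β)
    (hkβ : 4 * K * Real.exp (-(k * δ ^ 2 / 4)) ≤ β)
    (hX : ∀ a ∈ A, ∀ t ∈ D, a + t ∈ X) :
    ∃ T ⊆ D, (D.card : ℝ) ≤ 2 * K ^ k * T.card ∧ ∃ h : G → ℝ, ∀ t ∈ T,
      ((X.filter (fun x => δ < |h (x + t) - dens A S x|)).card : ℝ) ≤ β * A.card := by
  set P := Fintype.piFinset (fun _ : Fin k => A) with hP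
  have hAc : (0 : ℝ) < A.card := by exact_mod_cast card_pos.2 hA
  have hPc : (P.card : ℝ) = (A.card : ℝ) ^ k := by simp [hP, Fintype.card_piFinset]
  let avg : (Fin k → G) → G → ℝ := fun c x => (∑ i, pind S (x - c i)) / k
  let bad : (Fin k → G) → Finset G := fun c => X.filter (fun x => δ < |avg c x - dens A S x|)
  have hkr : (0 : ℝ) < k := by exact_mod_cast hk
  have hbx : ∀ x, ((P.filter (fun c => δ < |avg c x - dens A S x|)).card : ℝ) ≤
      2 * Real.exp (-(k * δ ^ 2 / 4)) * (A.card : ℝ) ^ k := by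
    intro x
    have := hoeffding2 A (fun a => pind S (x - a) - dens A S x) ?_ ?_ k δ hδ hδ1
    · refine le_trans ?_ this
      norm_cast
      apply card_le_card
      intro c hc
      rw [mem_filter] at hc ⊢
      refine ⟨hc.1, ?_⟩
      have e : ∑ i, (pind S (x - c i) - dens A S x) = k * (avg c x - dens A S x) := by
        simp only [avg, sum_sub_distrib, sum_const, card_univ, Fintype.card_fin, nsmul_eq_mul]
        field_simp
      rw [e, abs_mul, abs_of_pos hkr]
      exact mul_lt_mul_of_pos_left hc.2 hkr
    · intro a _
      rw [abs_le]
      constructor <;> linarith [pind_nonneg S (x - a), pind_le S (x - a), dens_nonneg A S x, dens_le A S x]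
    · rw [sum_sub_distrib, sum_const, nsmul_eq_mul, dens]
      field_simp; simp
  have hsum : ∑ c ∈ P, ((bad c).card : ℝ) ≤
      X.card * (2 * Real.exp (-(k * δ ^ 2 / 4)) * (A.card : ℝ) ^ k) := by
    have : ∀ c ∈ P, ((bad c).card : ℝ) = ∑ x ∈ X, if δ < |avg c x - dens A S x| then (1 : ℝ) else 0 := by
      intro c _; simp [bad]
    rw [sum_congr rfl this, sum_comm, ← nsmul_eq_mul, ← sum_const]
    refine sum_le_sum fun x _ => ?_
    have h2 := hbx x
    simpa using h2
  let good := P.filter (fun c => ((bad c).card : ℝ) ≤ β * A.card)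
  have hgood : (A.card : ℝ) ^ k ≤ 2 * good.card := by
    have h1 : ((P.filter (fun c => ¬ ((bad c).card : ℝ) ≤ β * A.card)).card : ℝ) * (β * A.card) ≤
        ∑ c ∈ P, ((bad c).card : ℝ) := by
      rw [← nsmul_eq_mul, ← sum_const]
      refine (sum_le_sum (g := fun c => ((bad c).card : ℝ)) ?_).trans
        (sum_le_sum_of_subset_of_nonneg (filter_subset _ _) fun _ _ _ => by positivity)
      intro c hc
      rw [mem_filter] at hc
      exact (not_le.1 hc.2).le
    have h2 : (P.card : ℝ) = good.card +
        (P.filter (fun c => ¬ ((bad c).card : ℝ) ≤ β * A.card)).card := by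
      norm_cast; exact (card_filter_add_card_filter_not _).symm
    set n := ((P.filter (fun c => ¬ ((bad c).card : ℝ) ≤ β * A.card)).card : ℝ)
    have h3 : n * (β * A.card) ≤ K * A.card * (2 * Real.exp (-(k * δ ^ 2 / 4)) * (A.card : ℝ) ^ k) :=
      h1.trans (hsum.trans (by gcongr))
    have h4 : 2 * n * (β * A.card) ≤ (A.card : ℝ) ^ k * (β * A.card) := by
      calc 2 * n * (β * A.card) ≤ 2 * (K * A.card * (2 * Real.exp (-(k * δ ^ 2 / 4)) * (A.card : ℝ) ^ k)) := by linarith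
        _ = (4 * K * Real.exp (-(k * δ ^ 2 / 4))) * (A.card * (A.card : ℝ) ^ k) := by ring
        _ ≤ β * (A.card * (A.card : ℝ) ^ k) := by gcongr
        _ = _ := by ring
    have h5 : 2 * n ≤ (A.card : ℝ) ^ k := le_of_mul_le_mul_right h4 (by positivity)
    rw [hPc] at h2
    linarith
  -- pigeonhole
  let tgt := Fintype.piFinset (fun _ : Fin k => X)
  have htgt : (tgt.card : ℝ) ≤ (K * A.card) ^ k := by
    simp only [tgt, Fintype.card_piFinset, prod_const, card_univ, Fintype.card_fin]
    push_cast
    gcongr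
  have hex : ∃ c ∈ tgt, (D.card : ℝ) ≤
      2 * K ^ k * ((good ×ˢ D).filter (fun z => (fun i => z.1 i + z.2) = c)).card := by
    by_contra hcon
    push Not at hcon
    have hmaps : ∀ z ∈ good ×ˢ D, (fun i => z.1 i + z.2) ∈ tgt := by
      intro z hz
      rw [mem_product] at hz
      simp only [tgt, Fintype.mem_piFinset]
      intro i
      have := (mem_filter.1 hz.1).1
      exact hX _ (Fintype.mem_piFinset.1 this i) _ hz.2
    have h1 := card_eq_sum_card_fiberwise (f := fun z : (Fin k → G) × G => (fun i => z.1 i + z.2))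
      (s := good ×ˢ D) (t := tgt) hmaps
    have hKk : 0 < K ^ k := by positivity
    have hne : tgt.Nonempty := by
      obtain ⟨a, ha⟩ := hA
      obtain ⟨t, ht⟩ := hD
      exact ⟨fun _ => a + t, Fintype.mem_piFinset.2 fun _ => hX a ha t ht⟩
    have h2 : 2 * K ^ k * ((good ×ˢ D).card : ℝ) < tgt.card * D.card := by
      rw [h1]
      push_cast
      rw [mul_sum, ← nsmul_eq_mul, ← sum_const]
      exact sum_lt_sum_of_nonempty hne hcon
    rw [card_product] at h2
    push_cast at h2
    have h3 : (tgt.card : ℝ) * D.card ≤ 2 * K ^ k * (good.card * D.card) := by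
      calc (tgt.card : ℝ) * D.card ≤ (K * A.card) ^ k * D.card := by gcongr
        _ = K ^ k * ((A.card : ℝ) ^ k * D.card) := by rw [mul_pow]; ring
        _ ≤ K ^ k * ((2 * good.card) * D.card) := by gcongr
        _ = _ := by ring
    linarith
  obtain ⟨c, _, hc⟩ := hex
  refine ⟨((good ×ˢ D).filter (fun z => (fun i => z.1 i + z.2) = c)).image Prod.snd, ?_, ?_, ?_⟩
  · intro t ht
    rw [mem_image] at ht
    obtain ⟨z, hz, rfl⟩ := ht
    exact (mem_product.1 (mem_filter.1 hz).1).2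
  · rw [card_image_of_injOn]
    · exact hc
    · intro z hz w hw h
      have hz := (mem_filter.1 hz).2
      have hw := (mem_filter.1 hw).2
      ext i
      · have e1 := congrFun hz i
        have e2 := congrFun hw i
        rw [← e2, h] at e1
        exact add_right_cancel e1
      · exact h
  · refine ⟨avg c, ?_⟩
    intro t ht
    rw [mem_image] at ht
    obtain ⟨z, hz, rfl⟩ := ht
    have hzc := (mem_filter.1 hz).2
    have hg := (mem_filter.1 (mem_product.1 (mem_filter.1 hz).1).1).2
    refine le_trans (le_of_eq ?_) hg
    congr 1
    simp only [bad]
    have : ∀ x, avg c (x + z.2) = avg z.1 x := by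
      intro x
      simp only [avg, ← hzc]
      congr 1
      refine sum_congr rfl fun i _ => ?_
      congr 1; abel
    simp only [this]

lemma walk_step (A X : Finset G) (S : G → Prop) (δ β : ℝ) (hδ : 0 ≤ δ) (h : G → ℝ) (t t' u : G)
    (ht : ((X.filter (fun x => δ < |h (x + t) - dens A S x|)).card : ℝ) ≤ β * A.card)
    (ht' : ((X.filter (fun x => δ < |h (x + t') - dens A S x|)).card : ℝ) ≤ β * A.card)
    (hu : ∀ x ∈ A, x + u ∈ X) (hu' : ∀ x ∈ A, x + (u + (t - t')) ∈ X) :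
    ∑ x ∈ A, dens A S (x + u) - (2 * δ + 2 * β) * A.card ≤
      ∑ x ∈ A, dens A S (x + (u + (t - t'))) := by
  have cnt : ∀ (v s : G), (∀ x ∈ A, x + v ∈ X) →
      ((X.filter (fun x => δ < |h (x + s) - dens A S x|)).card : ℝ) ≤ β * A.card →
      ∑ x ∈ A, (if δ < |h (x + v + s) - dens A S (x + v)| then (1 : ℝ) else 0) ≤ β * A.card := by
    intro v s hv hs
    refine le_trans ?_ hs
    rw [sum_boole]
    norm_cast
    refine card_le_card_of_injOn (fun x => x + v) ?_ (fun x _ y _ h => by simpa using h)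
    intro x hx
    simp only [mem_coe, mem_filter] at hx ⊢
    exact ⟨hv x hx.1, hx.2⟩
  have c1 := cnt u t hu ht
  have c2 := cnt (u + (t - t')) t' hu' ht'
  have pt : ∀ x ∈ A, dens A S (x + u) - 2 * δ
      - (if δ < |h (x + u + t) - dens A S (x + u)| then (1 : ℝ) else 0)
      - (if δ < |h (x + (u + (t - t')) + t') - dens A S (x + (u + (t - t')))| then (1 : ℝ) else 0) ≤
      dens A S (x + (u + (t - t'))) := by
    intro x _
    have e : x + (u + (t - t')) + t' = x + u + t := by abel
    rw [e]
    have b1 := dens_le A S (x + u)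
    have b2 := dens_nonneg A S (x + (u + (t - t')))
    by_cases h1 : δ < |h (x + u + t) - dens A S (x + u)|
    · have hd : 0 ≤ (if δ < |h (x + u + t) - dens A S (x + (u + (t - t')))| then (1 : ℝ) else 0) := by
        split_ifs <;> norm_num
      have : 0 ≤ |h (x + u + t) - dens A S (x + u)| := abs_nonneg _
      rw [if_pos h1]
      linarith
    · rw [if_neg h1]
      rw [not_lt, abs_le] at h1
      by_cases h2 : δ < |h (x + u + t) - dens A S (x + (u + (t - t')))|
      · rw [if_pos h2]; linarith
      · rw [if_neg h2]
        rw [not_lt, abs_le] at h2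
        linarith
  have := sum_le_sum pt
  rw [sum_sub_distrib, sum_sub_distrib, sum_sub_distrib, sum_const, nsmul_eq_mul] at this
  linarith

lemma walk (A X T : Finset G) (S : G → Prop) (δ β : ℝ) (hδ : 0 ≤ δ) (h : G → ℝ)
    (hT : ∀ t ∈ T, ((X.filter (fun x => δ < |h (x + t) - dens A S x|)).card : ℝ) ≤ β * A.card)
    (m : ℕ) (hX : ∀ j ≤ m, ∀ t t' : Fin j → G, (∀ i, t i ∈ T) → (∀ i, t' i ∈ T) → ∀ x ∈ A,
      x + ∑ i, (t i - t' i) ∈ X) :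
    ∀ t t' : Fin m → G, (∀ i, t i ∈ T) → (∀ i, t' i ∈ T) →
      ∑ x ∈ A, dens A S x - m * (2 * δ + 2 * β) * A.card ≤
        ∑ x ∈ A, dens A S (x + ∑ i, (t i - t' i)) := by
  induction m with
  | zero => intro t t' _ _; simp
  | succ m ih =>
    intro t t' ht ht'
    have h1 := ih (fun j hj => hX j (by omega)) (fun i => t i.castSucc) (fun i => t' i.castSucc)
      (fun i => ht _) (fun i => ht' _)
    have h2 := walk_step A X S δ β hδ h (t (Fin.last m)) (t' (Fin.last m))
      (∑ i : Fin m, (t i.castSucc - t' i.castSucc)) (hT _ (ht _)) (hT _ (ht' _))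
      (hX m (by omega) (fun i => t i.castSucc) (fun i => t' i.castSucc) (fun i => ht _) (fun i => ht' _))
      (by
        have := hX (m + 1) le_rfl t t' ht ht'
        simpa only [Fin.sum_univ_castSucc] using this)
    rw [Fin.sum_univ_castSucc]
    push_cast
    linarith

end cs
end KM
end

section
namespace KM
open Finset
open scoped Classical
set_option linter.unusedSectionVars false

variable {G : Type*} [AddCommGroup G] [Fintype G]

lemma char_sum {ι : Type*} (s : Finset ι) (u : ι → G) (ψ : AddChar G ℂ) :
    ψ (∑ i ∈ s, u i) = ∏ i ∈ s, ψ (u i) := by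
  induction s using Finset.induction_on with
  | empty => simp
  | insert a s ha ih => rw [sum_insert ha, prod_insert ha, AddChar.map_add_eq_mul, ih]

lemma riesz {ι : Type*} (s : Finset ι) (z : ι → G) (a : AddChar G ℂ → ℂ)
    (ha : ∀ l, ‖a l‖ ≤ 1 / 2) (M : ℝ) (Λ : Finset (AddChar G ℂ)) :
    ∀ ψ : AddChar G ℂ, (∀ ε : AddChar G ℂ → ℤ, (∀ l, ε l = -1 ∨ ε l = 0 ∨ ε l = 1) →
      (∃ l ∈ Λ, ε l ≠ 0) → ‖∑ i ∈ s, (ψ + ∑ l ∈ Λ, ε l • l) (z i)‖ ≤ M) →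
    ‖∑ i ∈ s, ψ (z i) * ∏ l ∈ Λ, (1 + a l * l (z i) + (starRingEnd ℂ) (a l) * (-l) (z i))
      - ∑ i ∈ s, ψ (z i)‖ ≤ (2 ^ Λ.card - 1) * M := by
  induction Λ using Finset.induction_on with
  | empty => intro ψ _; simp
  | insert l Λ hl ih =>
    intro ψ h
    have key : ∀ e : ℤ, (e = -1 ∨ e = 1) → ∀ ε : AddChar G ℂ → ℤ,
        (∀ l, ε l = -1 ∨ ε l = 0 ∨ ε l = 1) →
        ‖∑ i ∈ s, ((ψ + e • l) + ∑ l ∈ Λ, ε l • l) (z i)‖ ≤ M := by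
      intro e he ε hε
      have := h (Function.update ε l e) (by
        intro l'
        by_cases hh : l' = l
        · subst hh; simp; omega
        · rw [Function.update_of_ne hh]; exact hε l') ⟨l, mem_insert_self _ _, by
          simp; omega⟩
      rw [sum_insert hl, Function.update_self, sum_congr rfl (g := fun l => ε l • l)] at this
      · rwa [← add_assoc] at this
      · intro l' hl'
        rw [Function.update_of_ne]
        rintro rfl; exact hl hl'
    have h0 := ih ψ (by
      intro ε hε ⟨l', hl', hne⟩
      have := h (Function.update ε l 0) (by
        intro l'
        by_cases hh : l' = l
        · subst hh; simp
        · rw [Function.update_of_ne hh]; exact hε l') ⟨l', mem_insert_of_mem hl', by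
          rw [Function.update_of_ne]; · exact hne
          rintro rfl; exact hl hl'⟩
      rw [sum_insert hl, Function.update_self, sum_congr rfl (g := fun l => ε l • l)] at this
      · simpa using this
      · intro l' hl'
        rw [Function.update_of_ne]
        rintro rfl; exact hl hl')
    have h1 := ih (ψ + (1:ℤ) • l) (fun ε hε _ => key 1 (by simp) ε hε)
    have h2 := ih (ψ + (-1:ℤ) • l) (fun ε hε _ => key (-1) (by simp) ε hε)
    have g1 := key 1 (by simp) (fun _ => 0) (by simp)
    have g2 := key (-1) (by simp) (fun _ => 0) (by simp)
    simp only [zero_zsmul, sum_const_zero, add_zero] at g1 g2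
    set P : G → ℂ := fun x => ∏ l ∈ Λ, (1 + a l * l x + (starRingEnd ℂ) (a l) * (-l) x) with hP
    have e : ∑ i ∈ s, ψ (z i) * ∏ l ∈ insert l Λ, (1 + a l * l (z i) + (starRingEnd ℂ) (a l) * (-l) (z i))
        - ∑ i ∈ s, ψ (z i) = (∑ i ∈ s, ψ (z i) * P (z i) - ∑ i ∈ s, ψ (z i)) +
        a l * ∑ i ∈ s, (ψ + (1:ℤ) • l) (z i) * P (z i) +
        (starRingEnd ℂ) (a l) * ∑ i ∈ s, (ψ + (-1:ℤ) • l) (z i) * P (z i) := by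
      have : ∀ i ∈ s, ψ (z i) * ∏ l ∈ insert l Λ, (1 + a l * l (z i) + (starRingEnd ℂ) (a l) * (-l) (z i))
        = ψ (z i) * P (z i) + a l * ((ψ + (1:ℤ) • l) (z i) * P (z i)) +
          (starRingEnd ℂ) (a l) * ((ψ + (-1:ℤ) • l) (z i) * P (z i)) := by
        intro i _
        rw [prod_insert hl]
        simp only [hP, one_zsmul, neg_zsmul, AddChar.add_apply]
        ring
      rw [sum_congr rfl this, sum_add_distrib, sum_add_distrib, mul_sum, mul_sum]
      ring
    rw [e, card_insert_of_notMem hl]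
    have k1 : ‖∑ i ∈ s, (ψ + (1:ℤ) • l) (z i) * P (z i)‖ ≤ 2 ^ Λ.card * M := by
      have := norm_sub_norm_le (∑ i ∈ s, (ψ + (1:ℤ) • l) (z i) * P (z i)) (∑ i ∈ s, (ψ + (1:ℤ) • l) (z i))
      linarith
    have k2 : ‖∑ i ∈ s, (ψ + (-1:ℤ) • l) (z i) * P (z i)‖ ≤ 2 ^ Λ.card * M := by
      have := norm_sub_norm_le (∑ i ∈ s, (ψ + (-1:ℤ) • l) (z i) * P (z i)) (∑ i ∈ s, (ψ + (-1:ℤ) • l) (z i))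
      linarith
    refine (norm_add₃_le).trans ?_
    rw [norm_mul, norm_mul, RCLike.norm_conj]
    have m1 := mul_le_mul (ha l) k1 (norm_nonneg _) (by norm_num)
    have m2 := mul_le_mul (ha l) k2 (norm_nonneg _) (by norm_num)
    rw [pow_succ]
    linarith

lemma exp_half_le (y : ℝ) (h1 : -1 ≤ y) (h2 : y ≤ 1) :
    Real.exp (y / 2) ≤ Real.cosh (1/2) + y * Real.sinh (1/2) := by
  have h0 := (convexOn_exp).2 (Set.mem_univ (1/2:ℝ)) (Set.mem_univ (-(1/2):ℝ))
  have := @h0 ((1+y)/2) ((1-y)/2) (by linarith) (by linarith) (by ring)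
  simp only [smul_eq_mul] at this
  rw [Real.cosh_eq, Real.sinh_eq]
  have e : (1+y)/2*(1/2) + (1-y)/2*(-(1/2)) = y/2 := by ring
  rw [e] at this
  linarith

/-- dissociativity modulo a predicate -/
def Dissoc (P : AddChar G ℂ → Prop) (Λ : Finset (AddChar G ℂ)) : Prop :=
  ∀ ε : AddChar G ℂ → ℤ, (∀ l, ε l = -1 ∨ ε l = 0 ∨ ε l = 1) →
      (∃ l ∈ Λ, ε l ≠ 0) → ¬ P (∑ l ∈ Λ, ε l • l)

lemma chang_bound (Λ : Finset (AddChar G ℂ)) (T D5 D5p D6 : Finset G) (hT : T ⊆ D5)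
    (hD : ∀ u : Fin Λ.card → G, (∀ i, u i ∈ D6) → ∀ x ∈ D5, x - ∑ i, u i ∈ D5p)
    (hD6 : D6.Nonempty)
    (hdis : Dissoc (fun ψ => (D6.card : ℝ) ≤ 2 * ‖∑ x ∈ D6, ψ x‖) Λ)
    (hsp : ∀ l ∈ Λ, (T.card : ℝ) ≤ 2 * ‖∑ x ∈ T, l x‖) :
    (T.card : ℝ) * Real.exp (Λ.card / 8) ≤ 2 * D5p.card := by
  set n := Λ.card with hn
  have hc : ∀ l : AddChar G ℂ, ∃ c : ℂ, ‖c‖ = 1 ∧ c * ∑ x ∈ T, l x = ‖∑ x ∈ T, l x‖ := by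
    intro l
    by_cases h : ∑ x ∈ T, l x = 0
    · exact ⟨1, by simp, by simp [h]⟩
    · have h' : (‖∑ x ∈ T, l x‖ : ℂ) ≠ 0 := by simpa using h
      refine ⟨‖∑ x ∈ T, l x‖ / ∑ x ∈ T, l x, ?_, by field_simp⟩
      rw [norm_div, Complex.norm_real, norm_norm, div_self]
      simpa using h
  choose c hc1 hc2 using hc
  set κ := Real.sinh (1/2) / Real.cosh (1/2) with hκ
  have hch : 0 < Real.cosh (1/2) := Real.cosh_pos _
  have hκ0 : 0 ≤ κ := div_nonneg (Real.sinh_nonneg_iff.2 (by norm_num)) hch.le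
  have hκ1 : κ ≤ 1 := by
    rw [hκ, div_le_one hch]
    have := Real.cosh_sub_sinh (1/2)
    have := Real.exp_pos (-(1/2))
    linarith
  set y : AddChar G ℂ → G → ℝ := fun l x => (c l * l x).re with hy
  have hyb : ∀ l x, |y l x| ≤ 1 := by
    intro l x
    refine (Complex.abs_re_le_norm _).trans ?_
    rw [norm_mul, hc1, AddChar.norm_apply]; norm_num
  set H : G → ℝ := fun x => ∏ l ∈ Λ, (1 + κ * y l x) with hH
  have hH0 : ∀ x, 0 ≤ H x := fun x => prod_nonneg fun l _ => by
    have := abs_le.1 (hyb l x)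
    nlinarith
  -- upper bound pointwise
  have up : ∀ x, Real.exp (∑ l ∈ Λ, y l x / 2) ≤ Real.exp (n / 8) * H x := by
    intro x
    rw [Real.exp_sum]
    have : ∀ l ∈ Λ, Real.exp (y l x / 2) ≤ Real.exp (1/8) * (1 + κ * y l x) := by
      intro l _
      have hb := abs_le.1 (hyb l x)
      refine (exp_half_le _ hb.1 hb.2).trans ?_
      have e : Real.cosh (1/2) + y l x * Real.sinh (1/2) = Real.cosh (1/2) * (1 + κ * y l x) := by
        rw [hκ]; field_simp
      rw [e]
      refine mul_le_mul_of_nonneg_right ?_ (by nlinarith)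
      refine (Real.cosh_le_exp_half_sq _).trans (Real.exp_le_exp.2 (by norm_num))
    refine (prod_le_prod (fun _ _ => (Real.exp_pos _).le) this).trans ?_
    rw [prod_mul_distrib, prod_const, ← Real.exp_nat_mul]
    rw [← hn]
    have : (n:ℝ) * (1/8) = n/8 := by ring
    rw [this]
  have low : (T.card : ℝ) * Real.exp (n/4) ≤ ∑ x ∈ T, Real.exp (∑ l ∈ Λ, y l x / 2) := by
    have h1 : ∀ x ∈ T, Real.exp (n/4) * (1 + (∑ l ∈ Λ, y l x / 2 - n/4)) ≤ Real.exp (∑ l ∈ Λ, y l x / 2) := by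
      intro x _
      have := Real.add_one_le_exp (∑ l ∈ Λ, y l x / 2 - n/4)
      have h2 : Real.exp (∑ l ∈ Λ, y l x / 2) = Real.exp (n/4) * Real.exp (∑ l ∈ Λ, y l x / 2 - n/4) := by
        rw [← Real.exp_add]; ring_nf
      rw [h2]
      exact mul_le_mul_of_nonneg_left (by linarith) (Real.exp_pos _).le
    refine le_trans ?_ (sum_le_sum h1)
    rw [← mul_sum, mul_comm]
    refine mul_le_mul_of_nonneg_left ?_ (Real.exp_pos _).le
    rw [sum_add_distrib, sum_sub_distrib, sum_comm]
    have h3 : ∀ l ∈ Λ, (T.card : ℝ)/4 ≤ ∑ x ∈ T, y l x / 2 := by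
      intro l hl
      have : ∑ x ∈ T, y l x = ‖∑ x ∈ T, l x‖ := by
        have := congrArg Complex.re (hc2 l)
        rw [Complex.ofReal_re, mul_sum, Complex.re_sum] at this
        exact this
      rw [← sum_div, this]
      have := hsp l hl
      linarith
    have h4 := sum_le_sum h3
    rw [sum_const, nsmul_eq_mul, ← hn] at h4
    simp only [sum_const, nsmul_eq_mul]
    linarith
  have mid : (D6.card : ℝ)^n * ∑ x ∈ D5, H x ≤ 2 * D5p.card * D6.card^n := by
    set U := Fintype.piFinset (fun _ : Fin n => D6) with hU
    have hUc : (U.card : ℝ) = D6.card^n := by simp [hU]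
    have s1 : (U.card : ℝ) * ∑ x ∈ D5, H x ≤ ∑ p ∈ U ×ˢ D5p, H (p.2 + ∑ i, p.1 i) := by
      rw [sum_product, ← nsmul_eq_mul, ← sum_const]
      refine sum_le_sum fun u hu => ?_
      have hu' : ∀ i, u i ∈ D6 := by simpa [hU, Fintype.mem_piFinset] using hu
      refine le_trans (le_of_eq ?_) (sum_le_sum_of_subset_of_nonneg (s := D5.image (fun x => x - ∑ i, u i)) ?_ ?_)
      · rw [sum_image (fun a _ b _ h => by simpa using h)]
        simp
      · intro x hx
        obtain ⟨x', hx', rfl⟩ := mem_image.1 hx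
        exact hD u hu' x' hx'
      · intro x _ _; exact hH0 _
    have hval : ∀ ψ : AddChar G ℂ, ∑ p ∈ U ×ˢ D5p, ψ (p.2 + ∑ i, p.1 i) =
        (∑ x ∈ D5p, ψ x) * (∑ x ∈ D6, ψ x)^n := by
      intro ψ
      rw [sum_product_right, sum_pow', sum_mul_sum]
      refine sum_congr rfl fun x _ => sum_congr rfl fun u _ => ?_
      rw [AddChar.map_add_eq_mul, char_sum]
    have R := riesz (U ×ˢ D5p) (fun p => p.2 + ∑ i, p.1 i) (fun l => κ/2 * c l) (by
      intro l
      rw [norm_mul, hc1, norm_div, Complex.norm_real, Real.norm_eq_abs, abs_of_nonneg hκ0]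
      simp; linarith) (D5p.card * (D6.card/2)^n) Λ 0 (by
      intro ε hε hne
      rw [zero_add, hval, norm_mul, norm_pow]
      have hh := hdis ε hε hne
      push Not at hh
      refine mul_le_mul ?_ (pow_le_pow_left₀ (norm_nonneg _) (by linarith) _) (by positivity) (by positivity)
      refine (norm_sum_le _ _).trans ?_
      simp [AddChar.norm_apply])
    have hprod : ∀ x : G, ∏ l ∈ Λ, (1 + (κ/2 * c l) * l x + (starRingEnd ℂ) (κ/2 * c l) * (-l) x) = (H x : ℂ) := by
      intro x
      rw [hH]; push_cast
      refine prod_congr rfl fun l _ => ?_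
      rw [map_mul, map_div₀, Complex.conj_ofReal, AddChar.neg_apply, AddChar.map_neg_eq_conj]
      have : ((y l x : ℝ) : ℂ) = (c l * l x + (starRingEnd ℂ) (c l * l x))/2 := by
        rw [hy, Complex.re_eq_add_conj]
      rw [this, map_mul]
      rw [show (starRingEnd ℂ) 2 = 2 from Complex.conj_ofNat 2]; ring
    simp only [hprod] at R
    simp only [AddChar.zero_apply, one_mul, sum_const, nsmul_eq_mul, mul_one, card_product] at R
    rw [← Complex.ofReal_sum] at R
    have R1 : |∑ p ∈ U ×ˢ D5p, H (p.2 + ∑ i, p.1 i) - (U.card * D5p.card : ℕ)| ≤ (2^n-1) * (D5p.card * (D6.card/2)^n) := by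
      rw [← Real.norm_eq_abs, ← Complex.norm_real]
      push_cast at R ⊢
      exact R
    have R2 := (abs_le.1 R1).2
    push_cast at R2
    rw [hUc] at R2 s1
    have e : ((2:ℝ)^n-1) * (D5p.card * (D6.card/2)^n) ≤ D5p.card * D6.card^n := by
      rw [div_pow]
      have : ((2:ℝ)^n-1) * (D5p.card * (D6.card^n/2^n)) = D5p.card * D6.card^n - D5p.card * (D6.card^n/2^n) := by
        field_simp
      rw [this]
      have : (0:ℝ) ≤ D5p.card * (D6.card^n/2^n) := by positivity
      linarith
    linarith
  have hpos : (0:ℝ) < (D6.card:ℝ)^n := by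
    have := hD6.card_pos; positivity
  have mid' : ∑ x ∈ D5, H x ≤ 2 * D5p.card := by
    rw [mul_comm] at mid
    exact le_of_mul_le_mul_right mid hpos
  have fin1 : (T.card : ℝ) * Real.exp (n/4) ≤ Real.exp (n/8) * (2 * D5p.card) := by
    refine low.trans ((sum_le_sum fun x _ => up x).trans ?_)
    rw [← mul_sum]
    refine mul_le_mul_of_nonneg_left ((sum_le_sum_of_subset_of_nonneg hT fun x _ _ => hH0 x).trans mid') (Real.exp_pos _).le
  have e4 : Real.exp ((n:ℝ)/4) = Real.exp (n/8) * Real.exp (n/8) := by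
    rw [← Real.exp_add]; ring_nf
  rw [e4] at fin1
  have := Real.exp_pos ((n:ℝ)/8)
  nlinarith

lemma Dissoc.subset {P : AddChar G ℂ → Prop} {Λ Λ' : Finset (AddChar G ℂ)} (h : Dissoc P Λ)
    (hs : Λ' ⊆ Λ) : Dissoc P Λ' := by
  intro ε hε ⟨l, hl, hne⟩ hP
  refine h (fun l => if l ∈ Λ' then ε l else 0) ?_ ⟨l, hs hl, by simpa [hl] using hne⟩ ?_
  · intro l; by_cases h : l ∈ Λ' <;> simp [h, hε]
  · have : ∑ l ∈ Λ, (if l ∈ Λ' then ε l else 0) • l = ∑ l ∈ Λ', ε l • l := by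
      rw [← sum_subset hs (f := fun l => (if l ∈ Λ' then ε l else 0) • l)]
      · exact sum_congr rfl fun l hl => by rw [if_pos hl]
      · intro l _ hl; rw [if_neg hl, zero_zsmul]
    rw [this]; exact hP

lemma norm_char_add (χ χ' : AddChar G ℂ) (v : G) :
    ‖1 - (χ + χ') v‖ ≤ ‖1 - χ v‖ + ‖1 - χ' v‖ := by
  have : 1 - (χ + χ') v = (1 - χ v) + χ v * (1 - χ' v) := by
    rw [AddChar.add_apply]; ring
  rw [this]
  refine (norm_add_le _ _).trans ?_
  rw [norm_mul, AddChar.norm_apply, one_mul]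

lemma norm_char_neg (χ : AddChar G ℂ) (v : G) : ‖1 - (-χ) v‖ = ‖1 - χ v‖ := by
  rw [AddChar.neg_apply, norm_one_sub_neg]

lemma norm_char_zsmul (χ : AddChar G ℂ) (v : G) (e : ℤ) (he : e = -1 ∨ e = 0 ∨ e = 1) :
    ‖1 - (e • χ) v‖ ≤ ‖1 - χ v‖ := by
  rcases he with rfl | rfl | rfl
  · rw [neg_zsmul, one_zsmul, norm_char_neg]
  · simp
  · rw [one_zsmul]

lemma norm_char_sum (Λ : Finset (AddChar G ℂ)) (ε : AddChar G ℂ → ℤ)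
    (hε : ∀ l, ε l = -1 ∨ ε l = 0 ∨ ε l = 1) (v : G) :
    ‖1 - (∑ l ∈ Λ, ε l • l) v‖ ≤ ∑ l ∈ Λ, ‖1 - l v‖ := by
  induction Λ using Finset.induction_on with
  | empty => simp
  | insert a s ha ih =>
    rw [sum_insert ha, sum_insert ha]
    refine (norm_char_add _ _ _).trans ?_
    have := norm_char_zsmul a v (ε a) (hε a)
    linarith

lemma chang (n : ℕ) (T D5 D5p D6 : Finset G) (hT : T ⊆ D5)
    (hD : ∀ u : Fin n → G, (∀ i, u i ∈ D6) → ∀ x ∈ D5, x - ∑ i, u i ∈ D5p)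
    (hD6 : D6.Nonempty) (hn : 2 * (D5p.card : ℝ) < T.card * Real.exp (n / 8)) :
    ∃ Λ : Finset (AddChar G ℂ), Λ.card ≤ n ∧ ∀ γ : AddChar G ℂ, (T.card : ℝ) ≤ 2 * ‖∑ x ∈ T, γ x‖ →
      ∃ ψ : AddChar G ℂ, (D6.card : ℝ) ≤ 2 * ‖∑ x ∈ D6, ψ x‖ ∧
        ∀ v, ‖1 - γ v‖ ≤ ‖1 - ψ v‖ + ∑ l ∈ Λ, ‖1 - l v‖ := by
  set P : AddChar G ℂ → Prop := fun ψ => (D6.card : ℝ) ≤ 2 * ‖∑ x ∈ D6, ψ x‖ with hP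
  set Q : Finset (AddChar G ℂ) → Prop := fun Λ => Dissoc P Λ ∧
    ∀ l ∈ Λ, (T.card : ℝ) ≤ 2 * ‖∑ x ∈ T, l x‖ with hQ
  obtain ⟨Λ, hΛ, hmax⟩ := exists_max_image ((univ : Finset (Finset (AddChar G ℂ))).filter Q)
    Finset.card ⟨∅, by simp [hQ, Dissoc]⟩
  rw [mem_filter] at hΛ
  obtain ⟨-, hdis, hsp⟩ := hΛ
  refine ⟨Λ, ?_, ?_⟩
  · by_contra hc
    push Not at hc
    obtain ⟨Λ', hs, hcard⟩ := exists_subset_card_eq hc.le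
    subst hcard
    have := chang_bound Λ' T D5 D5p D6 hT hD hD6 (hdis.subset hs) (fun l hl => hsp l (hs hl))
    linarith
  · intro γ hγ
    have hP0 : P 0 := by
      simp only [hP, AddChar.zero_apply, sum_const, nsmul_eq_mul, mul_one, Complex.norm_natCast]
      have : (0:ℝ) ≤ D6.card := by positivity
      linarith
    by_cases hm : γ ∈ Λ
    · refine ⟨0, hP0, fun v => ?_⟩
      have := single_le_sum (f := fun l : AddChar G ℂ => ‖1 - l v‖) (fun _ _ => norm_nonneg _) hm
      simpa using this
    · have hnd : ¬ Dissoc P (insert γ Λ) := by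
        intro hd
        have := hmax (insert γ Λ) (mem_filter.2 ⟨mem_univ _, hd, by
          intro l hl
          rcases mem_insert.1 hl with rfl | hl
          · exact hγ
          · exact hsp l hl⟩)
        rw [card_insert_of_notMem hm] at this
        omega
      rw [Dissoc] at hnd
      push Not at hnd
      obtain ⟨ε, hε, ⟨l, hl, hne⟩, hPs⟩ := hnd
      rw [sum_insert hm] at hPs
      have hge : ε γ ≠ 0 := by
        intro h0
        rw [h0, zero_zsmul, zero_add] at hPs
        rcases mem_insert.1 hl with rfl | hl
        · exact hne h0
        · exact hdis ε hε ⟨l, hl, hne⟩ hPs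
      refine ⟨_, hPs, fun v => ?_⟩
      have h1 := norm_char_sum Λ ε hε v
      set σ := ∑ l ∈ Λ, ε l • l with hσ
      have h2 : ‖1 - γ v‖ = ‖1 - (ε γ • γ) v‖ := by
        rcases hε γ with h | h | h
        · rw [h, neg_zsmul, one_zsmul, norm_char_neg]
        · exact absurd h hge
        · rw [h, one_zsmul]
      have h3 := norm_char_add (ε γ • γ + σ) (-σ) v
      rw [add_neg_cancel_right, norm_char_neg] at h3
      linarith

lemma char_almost (D S : Finset G) (ψ : AddChar G ℂ) (v : G) (M : ℝ) (hM : 0 < M)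
    (hS : S ⊆ D) (hSv : ∀ x ∈ S, x - v ∈ D) (hne : D.Nonempty) (hc : (D.card : ℝ) ≤ (1 + 1 / M) * S.card)
    (hψ : (D.card : ℝ) ≤ 2 * ‖∑ x ∈ D, ψ x‖) : ‖1 - ψ v‖ ≤ 4 / M := by
  have hcp : (0:ℝ) < D.card := by exact_mod_cast hne.card_pos
  have hSD : (S.card : ℝ) ≤ D.card := by exact_mod_cast card_le_card hS
  have e1 : (1 - ψ v) * ∑ x ∈ D, ψ x = ∑ x ∈ D, ψ x - ∑ x ∈ D.image (fun x => x + v), ψ x := by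
    rw [sum_image (fun a _ b _ h => by simpa using h), sub_mul, one_mul, mul_sum]
    congr 1
    refine sum_congr rfl fun x _ => ?_
    rw [AddChar.map_add_eq_mul, mul_comm]
  have hS' : S ⊆ D.image (fun x => x + v) := fun x hx => mem_image.2 ⟨x - v, hSv x hx, by simp⟩
  have hcard : (D.image (fun x => x + v)).card = D.card :=
    card_image_of_injective _ (add_left_injective v)
  have b : ∀ E : Finset G, S ⊆ E → E.card = D.card → ‖∑ x ∈ E, ψ x - ∑ x ∈ S, ψ x‖ ≤ D.card - S.card := by
    intro E hE hEc
    rw [← sum_sdiff hE, add_sub_cancel_right]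
    refine (norm_sum_le _ _).trans ?_
    simp only [AddChar.norm_apply, sum_const, nsmul_eq_mul, mul_one]
    rw [card_sdiff_of_subset hE, Nat.cast_sub (card_le_card hE), hEc]
  have b1 := b D hS rfl
  have b2 := b _ hS' hcard
  have h3 : ‖1 - ψ v‖ * ‖∑ x ∈ D, ψ x‖ ≤ 2 * (D.card - S.card) := by
    rw [← norm_mul, e1]
    have := norm_sub_le (∑ x ∈ D, ψ x - ∑ x ∈ S, ψ x) (∑ x ∈ D.image (fun x => x + v), ψ x - ∑ x ∈ S, ψ x)
    rw [sub_sub_sub_cancel_right] at this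
    linarith
  have h4 : (D.card : ℝ) - S.card ≤ D.card / M := by
    have : (1 + 1 / M) * S.card = S.card + S.card / M := by ring
    have : (S.card : ℝ) / M ≤ D.card / M := by gcongr
    linarith
  have h5 : ‖1 - ψ v‖ * D.card ≤ 4 / M * D.card := by
    have := mul_le_mul_of_nonneg_left hψ (norm_nonneg (1 - ψ v))
    have : 4 / M * D.card = 4 * (D.card / M) := by ring
    nlinarith
  exact le_of_mul_le_mul_right h5 hcp

lemma parseval (g : G → ℝ) :
    ∑ γ : AddChar G ℂ, ‖∑ y, (g y : ℂ) * γ y‖ ^ 2 = Fintype.card G * ∑ y, g y ^ 2 := by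
  have : (((∑ γ : AddChar G ℂ, ‖∑ y, (g y : ℂ) * γ y‖ ^ 2 : ℝ)) : ℂ) =
      ((Fintype.card G * ∑ y, g y ^ 2 : ℝ) : ℂ) := by
    push_cast
    have h1 : ∀ γ : AddChar G ℂ, ((‖∑ y, (g y : ℂ) * γ y‖ : ℂ)) ^ 2 =
        ∑ y, ∑ y', (g y : ℂ) * g y' * γ (y - y') := by
      intro γ
      rw [← Complex.mul_conj', map_sum, sum_mul_sum]
      refine sum_congr rfl fun y _ => sum_congr rfl fun y' _ => ?_
      rw [map_mul, Complex.conj_ofReal, ← AddChar.map_neg_eq_conj, sub_eq_add_neg,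
        AddChar.map_add_eq_mul]
      ring
    rw [sum_congr rfl fun γ _ => h1 γ, sum_comm, mul_sum]
    refine sum_congr rfl fun y _ => ?_
    rw [sum_comm]
    rw [sum_eq_single y]
    · rw [← mul_sum, AddChar.sum_apply_eq_ite]; simp; ring
    · intro y' _ hne
      rw [← mul_sum, AddChar.sum_apply_eq_ite, if_neg (sub_ne_zero.2 hne.symm)]; simp
    · simp
  exact_mod_cast this

lemma inversion (g : G → ℝ) (x : G) :
    (Fintype.card G : ℂ) * g x = ∑ γ : AddChar G ℂ, (∑ y, (g y : ℂ) * γ (-y)) * γ x := by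
  simp only [sum_mul]
  rw [sum_comm, sum_eq_single x]
  · have : ∀ γ : AddChar G ℂ, (g x : ℂ) * γ (-x) * γ x = g x := by
      intro γ
      rw [mul_assoc, ← AddChar.map_add_eq_mul]; simp
    rw [sum_congr rfl fun γ _ => this γ]
    simp [AddChar.card_eq]
  · intro y _ hne
    have : ∀ γ : AddChar G ℂ, (g y : ℂ) * γ (-y) * γ x = g y * γ (x - y) := by
      intro γ
      rw [mul_assoc, ← AddChar.map_add_eq_mul]; congr 2; abel
    rw [sum_congr rfl fun γ _ => this γ, ← mul_sum, AddChar.sum_apply_eq_ite,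
      if_neg (sub_ne_zero.2 hne.symm), mul_zero]
  · simp

/-- the pairs of tuples -/
noncomputable def tup (T : Finset G) (m : ℕ) : Finset ((Fin m → G) × (Fin m → G)) :=
  Fintype.piFinset (fun _ => T) ×ˢ Fintype.piFinset (fun _ => T)

lemma mem_tup {T : Finset G} {m : ℕ} {p} : p ∈ tup T m ↔ (∀ i, p.1 i ∈ T) ∧ ∀ i, p.2 i ∈ T := by
  simp [tup, Fintype.mem_piFinset]

lemma card_tup (T : Finset G) (m : ℕ) : (tup T m).card = T.card ^ m * T.card ^ m := by
  simp [tup]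

lemma sum_tup (T : Finset G) (m : ℕ) (γ : AddChar G ℂ) :
    ∑ p ∈ tup T m, γ (∑ i, (p.1 i - p.2 i)) = ((‖∑ x ∈ T, γ x‖ ^ 2 : ℝ) : ℂ) ^ m := by
  rw [tup, sum_product]
  push_cast
  rw [← Complex.mul_conj', mul_pow, ← map_pow, sum_pow', map_sum, sum_mul_sum]
  refine sum_congr rfl fun u _ => sum_congr rfl fun u' _ => ?_
  rw [sum_sub_distrib, sub_eq_add_neg, AddChar.map_add_eq_mul, AddChar.map_neg_eq_conj,
    char_sum, char_sum]

lemma fourier_stable (A T : Finset G) (g : G → ℝ) (m : ℕ) (v : G) (ξ : ℝ) (hξ : 0 ≤ ξ)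
    (hv : ∀ γ : AddChar G ℂ, (T.card : ℝ) ≤ 2 * ‖∑ x ∈ T, γ x‖ → ‖1 - γ v‖ ≤ ξ) :
    |∑ x ∈ A, ∑ p ∈ tup T m, g (x + ∑ i, (p.1 i - p.2 i) + v)
      - ∑ x ∈ A, ∑ p ∈ tup T m, g (x + ∑ i, (p.1 i - p.2 i))| ≤
    (ξ + 2 / 4 ^ m) * (tup T m).card * ((∑ y, g y ^ 2 + A.card) / 2) := by
  set N : ℝ := ((Fintype.card G : ℕ) : ℝ) with hN
  have hNpos : 0 < N := by rw [hN]; exact_mod_cast Fintype.card_pos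
  set gh : AddChar G ℂ → ℂ := fun γ => ∑ y, (g y : ℂ) * γ (-y) with hgh
  set ah : AddChar G ℂ → ℂ := fun γ => ∑ x ∈ A, γ x with hah
  have F : ∀ w : G, (N : ℂ) * (∑ x ∈ A, ∑ p ∈ tup T m, g (x + ∑ i, (p.1 i - p.2 i) + w) : ℝ) =
      ∑ γ : AddChar G ℂ, gh γ * ah γ * ((‖∑ x ∈ T, γ x‖ ^ 2 : ℝ) : ℂ) ^ m * γ w := by
    intro w
    push_cast
    rw [mul_sum]
    have : ∀ x ∈ A, (N : ℂ) * ∑ p ∈ tup T m, (g (x + ∑ i, (p.1 i - p.2 i) + w) : ℂ) =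
        ∑ γ : AddChar G ℂ, gh γ * γ x * ((‖∑ x ∈ T, γ x‖ ^ 2 : ℝ) : ℂ) ^ m * γ w := by
      intro x _
      rw [mul_sum]
      have h : ∀ p ∈ tup T m, (N : ℂ) * (g (x + ∑ i, (p.1 i - p.2 i) + w) : ℂ) =
          ∑ γ : AddChar G ℂ, gh γ * γ x * γ (∑ i, (p.1 i - p.2 i)) * γ w := by
        intro p _
        rw [hN, Complex.ofReal_natCast, inversion]
        refine sum_congr rfl fun γ _ => ?_
        rw [AddChar.map_add_eq_mul, AddChar.map_add_eq_mul]; ring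
      rw [sum_congr rfl h, sum_comm]
      refine sum_congr rfl fun γ _ => ?_
      rw [← sum_mul, ← mul_sum, sum_tup]
    rw [sum_congr rfl this, sum_comm]
    refine sum_congr rfl fun γ _ => ?_
    rw [← sum_mul, ← sum_mul, ← mul_sum]; push_cast; rfl
  have F0 := F 0
  simp only [add_zero] at F0
  have Fv := F v
  set Φv := ∑ x ∈ A, ∑ p ∈ tup T m, g (x + ∑ i, (p.1 i - p.2 i) + v) with hΦv
  set Φ0 := ∑ x ∈ A, ∑ p ∈ tup T m, g (x + ∑ i, (p.1 i - p.2 i)) with hΦ0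
  have d : ((N * (Φv - Φ0) : ℝ) : ℂ) = ∑ γ : AddChar G ℂ, gh γ * ah γ * ((‖∑ x ∈ T, γ x‖ ^ 2 : ℝ) : ℂ) ^ m * (γ v - 1) := by
    push_cast
    push_cast at Fv F0
    rw [mul_sub, Fv, F0, ← sum_sub_distrib]
    refine sum_congr rfl fun γ _ => ?_
    simp; ring
  have d2 : N * |Φv - Φ0| ≤ ∑ γ : AddChar G ℂ, (ξ + 2 / 4 ^ m) * (tup T m).card * ((‖gh γ‖^2 + ‖ah γ‖^2) / 2) := by
    have : N * |Φv - Φ0| = ‖((N * (Φv - Φ0) : ℝ) : ℂ)‖ := by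
      rw [Complex.norm_real, Real.norm_eq_abs, abs_mul, abs_of_pos hNpos]
    rw [this, d]
    refine (norm_sum_le _ _).trans (sum_le_sum fun γ _ => ?_)
    rw [norm_mul, norm_mul, norm_mul, norm_pow, Complex.norm_real, Real.norm_eq_abs, abs_of_nonneg (by positivity), norm_sub_rev]
    have hc : ((tup T m).card : ℝ) = ((T.card : ℝ)^2)^m := by
      rw [card_tup]; push_cast; ring
    have k1 : (‖∑ x ∈ T, γ x‖ ^ 2) ^ m * ‖1 - γ v‖ ≤ (ξ + 2 / 4 ^ m) * (tup T m).card := by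
      rw [hc]
      by_cases hs : (T.card : ℝ) ≤ 2 * ‖∑ x ∈ T, γ x‖
      · have a1 := hv γ hs
        have a2 : ‖∑ x ∈ T, γ x‖ ≤ T.card := by
          refine (norm_sum_le _ _).trans ?_
          simp [AddChar.norm_apply]
        have a3 : (‖∑ x ∈ T, γ x‖ ^ 2) ^ m ≤ ((T.card : ℝ)^2)^m := by gcongr
        have a4 := mul_le_mul a3 a1 (norm_nonneg _) (by positivity)
        have a5 : (0:ℝ) ≤ 2 / 4^m * ((T.card : ℝ)^2)^m := by positivity
        linarith
      · push Not at hs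
        have a1 : ‖1 - γ v‖ ≤ 2 := by
          refine (norm_sub_le _ _).trans ?_
          rw [AddChar.norm_apply]; norm_num
        have a3 : (‖∑ x ∈ T, γ x‖ ^ 2) ^ m ≤ ((T.card : ℝ)^2/4)^m := by
          have : ‖∑ x ∈ T, γ x‖ ^ 2 ≤ (T.card : ℝ)^2/4 := by
            have := norm_nonneg (∑ x ∈ T, γ x)
            nlinarith
          gcongr
        have a4 := mul_le_mul a3 a1 (norm_nonneg _) (by positivity)
        have a5 : (0:ℝ) ≤ ξ * ((T.card : ℝ)^2)^m := by positivity
        have a6 : ((T.card : ℝ)^2/4)^m * 2 = 2 / 4^m * ((T.card : ℝ)^2)^m := by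
          rw [div_pow]; ring
        linarith
    have k2 : ‖gh γ‖ * ‖ah γ‖ ≤ (‖gh γ‖^2 + ‖ah γ‖^2) / 2 := by
      nlinarith [sq_nonneg (‖gh γ‖ - ‖ah γ‖)]
    have := mul_le_mul k2 k1 (by positivity) (by positivity)
    calc _ = ‖gh γ‖ * ‖ah γ‖ * ((‖∑ x ∈ T, γ x‖ ^ 2) ^ m * ‖1 - γ v‖) := by ring
      _ ≤ _ := this
      _ = _ := by ring
  have p1 : ∑ γ, ‖gh γ‖^2 = N * ∑ y, g y ^ 2 := by
    rw [hN, ← parseval]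
    refine sum_congr rfl fun γ _ => ?_
    congr 1
    rw [hgh, ← RCLike.norm_conj, map_sum]
    congr 1
    refine sum_congr rfl fun y _ => ?_
    rw [map_mul, AddChar.map_neg_eq_conj]; simp
  have p2 : ∑ γ, ‖ah γ‖^2 = N * A.card := by
    have := parseval (fun x => ind A x)
    have e1 : ∀ γ : AddChar G ℂ, ∑ y, ((ind A y : ℝ) : ℂ) * γ y = ah γ := by
      intro γ
      have : ∀ y, ((ind A y : ℝ) : ℂ) * γ y = if y ∈ A then γ y else 0 := by
        intro y
        by_cases h : y ∈ A <;> simp [ind, h]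
      simp only [this, hah]
      simp
    have e2 : ∑ y, ind A y ^ 2 = A.card := by
      simp [ind]
    rw [e2] at this
    simp only [e1] at this
    exact this
  rw [← mul_sum, ← sum_div, sum_add_distrib, p1, p2] at d2
  have : (ξ + 2 / 4 ^ m) * (tup T m).card * ((N * ∑ y, g y ^ 2 + N * A.card) / 2) =
    N * ((ξ + 2 / 4 ^ m) * (tup T m).card * ((∑ y, g y ^ 2 + A.card) / 2)) := by ring
  rw [this] at d2
  exact le_of_mul_le_mul_left d2 hNpos
end KM
end

section
namespace KM
open Finset
open scoped Classical
set_option linter.unusedSectionVars false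

variable {G : Type*} [AddCommGroup G] [Fintype G]

def mm (h : ℕ) : ℕ := h + 13
def kk (h : ℕ) : ℕ := 64000000 * mm h ^ 2 * (h + 15 + mm h)
def tt (h : ℕ) : ℕ := (h + 1) * kk h + 1
def nn (h : ℕ) : ℕ := 8 * (tt h + 3)

lemma two_pow_le_exp (n : ℕ) : (2:ℝ)^n ≤ Real.exp n := by
  have : (2:ℝ) ≤ Real.exp 1 := by have := Real.add_one_le_exp 1; linarith
  calc (2:ℝ)^n ≤ (Real.exp 1)^n := by gcongr
    _ = Real.exp n := by rw [← Real.exp_nat_mul]; simp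

lemma arith1 (n m d h : ℕ) (σ4 ρ7 : ℝ) (hσ2 : σ4 ≤ 2) (_ : 0 ≤ σ4) (hn1 : (1:ℝ) ≤ n) (hm1 : (1:ℝ) ≤ m)
    (hdr : (1:ℝ) ≤ d)
    (h7 : ρ7 ≤ σ4 / (1568 * m * d ^ 2 * n * 2 ^ (h + 15))) : (n:ℝ) * ρ7 ≤ 1 / 2^(h+12) / 2 := by
  have a1 : (n:ℝ) * ρ7 ≤ n * (σ4 / (1568 * m * d ^ 2 * n * 2 ^ (h + 15))) := by gcongr
  have a2 : n * (σ4 / (1568 * m * d ^ 2 * n * 2 ^ (h + 15))) = σ4 / (1568 * (m * d^2) * 2 ^ (h+15)) := by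
    field_simp
  have hmd : (1:ℝ) ≤ m * d^2 := one_le_mul_of_one_le_of_one_le hm1 (one_le_pow₀ hdr)
  have a3 : σ4 / (1568 * (m * d^2) * 2 ^ (h+15)) ≤ 2 / (1568 * 1 * 2 ^ (h+15)) := by gcongr
  have a4 : (2:ℝ) / (1568 * 1 * 2 ^ (h+15)) ≤ 1 / 2^(h+12) / 2 := by
    rw [div_div, div_le_div_iff₀ (by positivity) (by positivity), pow_add, pow_add]
    have : (0:ℝ) < 2^h := by positivity
    norm_num; linarith
  linarith

lemma arith2 (j m : ℕ) (ρ σ ρ4 : ℝ) (hj' : (j:ℝ) ≤ m) (h : ρ * (2 * m) ≤ σ) (h0 : 0 ≤ ρ) :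
    ρ4 + j * (ρ + ρ) ≤ ρ4 + σ := by nlinarith

set_option maxHeartbeats 4000000 in
lemma core (Γ : Finset (AddChar G ℂ)) (d : ℕ) (hd : Γ.card ≤ d) (hd1 : 1 ≤ d) (ρ4 σ4 : ℝ)

    (hσ : 0 < σ4) (hσ2 : σ4 ≤ 2)
    (hX : ((bohr Γ (ρ4 + σ4)).card : ℝ) ≤ 2 * (bohr Γ ρ4).card) (A : Finset G)
    (hA : A ⊆ bohr Γ ρ4) (hne : A.Nonempty) (h : ℕ)
    (hcard : ((bohr Γ ρ4).card : ℝ) ≤ 2 ^ h * A.card) (S : G → Prop)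
    (hbad : 1000 * (∑ a ∈ A, ∑ a' ∈ A, if S (a - a') then 0 else (1:ℝ)) ≤ (A.card : ℝ) ^ 2) :
    ∃ Λ : Finset (AddChar G ℂ), Λ.card ≤ nn h ∧ ∀ ρ7 : ℝ, 0 ≤ ρ7 →
      ρ7 ≤ σ4 / (1568 * mm h * d ^ 2 * nn h * 2 ^ (h + 15)) →
      ∃ u, 0.996 * ((bohr (Γ ∪ Λ) ρ7).card : ℝ) ≤ ∑ v ∈ bohr (Γ ∪ Λ) ρ7, pind S (u + v) := by
  obtain ⟨m, hm⟩ : ∃ m, m = mm h := ⟨_, rfl⟩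
  obtain ⟨k, hk⟩ : ∃ k, k = kk h := ⟨_, rfl⟩
  obtain ⟨t, ht⟩ : ∃ t, t = tt h := ⟨_, rfl⟩
  obtain ⟨n, hn⟩ : ∃ n, n = nn h := ⟨_, rfl⟩
  rw [← hm, ← hn]
  have hm13 : m = h + 13 := hm
  obtain ⟨M, hM⟩ : ∃ M : ℕ, M = 2^(h+15) := ⟨_, rfl⟩
  have hM1 : 1 ≤ M := by rw [hM]; exact Nat.one_le_two_pow
  have hMr : (M:ℝ) = 2^(h+15) := by rw [hM]; push_cast; rfl
  have hMp : (0:ℝ) < M := by rw [hMr]; positivity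
  have hm1 : (1:ℝ) ≤ m := by rw [hm13]; push_cast; linarith [(Nat.cast_nonneg h : (0:ℝ) ≤ h)]
  have hn1 : (1:ℝ) ≤ n := by
    have : 1 ≤ n := by rw [hn, nn]; omega
    exact_mod_cast this
  have hdr : (1:ℝ) ≤ d := by exact_mod_cast hd1
  have hAc : (0:ℝ) < A.card := by exact_mod_cast hne.card_pos
  set X := bohr Γ (ρ4 + σ4) with hXdef
  have hXA : (X.card : ℝ) ≤ 2 ^ (h+1) * A.card := by rw [pow_succ]; linarith
  have hAX : A ⊆ X := hA.trans (bohr_mono (by linarith))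
  -- D5
  obtain ⟨ρ5, -, hρ5, hρ5b, hreg5⟩ := exists_regular Γ hd hd1 (m := 1) le_rfl
    (ρ₀ := σ4 / (2 * m)) (by positivity)
  set κ5 := σ4 / (2 * m) / (28 * d * (1:ℕ)) with hκ5
  have hκ5p : 0 < κ5 := by rw [hκ5]; positivity
  set D5 := bohr Γ ρ5 with hD5
  have hD5ne : D5.Nonempty := ⟨0, bohr_zero_mem (hκ5p.le.trans hρ5b)⟩
  have hreg5' : ((bohr Γ (ρ5 + κ5)).card : ℝ) ≤ 2 * D5.card := by
    have h1 : ((bohr Γ (ρ5 - κ5)).card : ℝ) ≤ D5.card := by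
      exact_mod_cast card_le_card (bohr_mono (by linarith))
    norm_num at hreg5
    linarith
  -- D6
  obtain ⟨ρ6, -, hρ6, hρ6b, hreg6⟩ := exists_regular Γ hd hd1 (m := M) hM1
    (ρ₀ := κ5 / n) (by positivity)
  set κ6 := κ5 / n / (28 * d * M) with hκ6
  have hκ6p : 0 < κ6 := by rw [hκ6]; positivity
  set D6 := bohr Γ ρ6 with hD6
  have hD6ne : D6.Nonempty := ⟨0, bohr_zero_mem (hκ6p.le.trans hρ6b)⟩
  -- Croot-Sisask
  have hmem : ∀ j ≤ m, ∀ t t' : Fin j → G, (∀ i, t i ∈ D5) → (∀ i, t' i ∈ D5) → ∀ x ∈ A,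
      x + ∑ i, (t i - t' i) ∈ X := by
    intro j hj t t' h1 h2 x hx
    have b1 := bohr_sum univ (fun i => t i - t' i) (fun i _ => bohr_sub (h1 i) (h2 i))
    have b2 := bohr_add (hA hx) b1
    refine bohr_mono ?_ b2
    rw [card_univ, Fintype.card_fin]
    have hj' : (j:ℝ) ≤ m := by exact_mod_cast hj
    have hρ5' : ρ5 * (2 * m) ≤ σ4 := by rwa [le_div_iff₀ (by positivity)] at hρ5
    exact arith2 j m ρ5 σ4 ρ4 hj' hρ5' (hκ5p.le.trans hρ5b)
  have hkpos : 0 < k := by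
    rw [hk, kk, mm]; positivity
  obtain ⟨T, hTD, hTcard, g, hg⟩ := croot_sisask A X D5 S k hkpos (2^(h+1)) (1/(4000*m)) (1/(4000*m))
    (by positivity) hne hD5ne hXA (by positivity) (by
      rw [div_le_one (by positivity)]; linarith) (by positivity) (by
      have e1 : (k:ℝ) * (1/(4000*m))^2/4 = ((h+15+m : ℕ):ℝ) := by
        rw [hk, kk, ← hm]; push_cast; field_simp; norm_num
      rw [e1, Real.exp_neg]
      have e2 := two_pow_le_exp (h+15+m)
      have e3 : (Real.exp ((h+15+m : ℕ):ℝ))⁻¹ ≤ ((2:ℝ)^(h+15+m))⁻¹ := inv_anti₀ (by positivity) e2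
      have e4 : 4 * (2:ℝ)^(h+1) * ((2:ℝ)^(h+15+m))⁻¹ = 1 / (4096 * 2^m) := by
        rw [pow_add, pow_add, pow_add]; field_simp; norm_num
      refine (mul_le_mul_of_nonneg_left e3 (by positivity)).trans ?_
      rw [e4]
      have e5 : (m:ℝ) ≤ 2^m := by exact_mod_cast Nat.lt_two_pow_self.le
      refine one_div_le_one_div_of_le (by positivity) ?_
      linarith) (by
      intro a ha t ht
      have := hmem 1 (by omega) (fun _ => t) (fun _ => 0) (fun _ => ht) (fun _ => bohr_zero_mem (hκ5p.le.trans hρ5b)) a ha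
      simpa using this)
  have hTcard' : (D5.card : ℝ) ≤ 2 ^ t * T.card := by
    have : (2:ℝ)^t = 2 * (2^(h+1))^k := by
      rw [ht, tt, ← hk, pow_succ, pow_mul]; ring
    rw [this]; exact hTcard
  have hTpos : (0:ℝ) < T.card := by
    have : (0:ℝ) < D5.card := by exact_mod_cast hD5ne.card_pos
    by_contra hc
    have : (2:ℝ)^t * T.card ≤ 0 := mul_nonpos_of_nonneg_of_nonpos (by positivity) (not_lt.1 hc)
    linarith
  -- Chang
  obtain ⟨Λ, hΛ, hspec⟩ := chang n T D5 (bohr Γ (ρ5 + κ5)) D6 hTD (by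
    intro u hu x hx
    have b1 := bohr_sum univ u (fun i _ => hu i)
    refine bohr_mono ?_ (bohr_sub hx b1)
    rw [card_univ, Fintype.card_fin]
    have : ρ6 * n ≤ κ5 := by rwa [le_div_iff₀ (by positivity)] at hρ6
    linarith) hD6ne (by
    have e1 : ((n:ℝ)/8) = ((t+3:ℕ):ℝ) := by rw [hn, nn, ← ht]; push_cast; ring
    rw [e1]
    have e2 := two_pow_le_exp (t+3)
    have e3 : (2:ℝ)^(t+3) = 8 * 2^t := by rw [pow_add]; norm_num; ring
    have e4 := mul_le_mul_of_nonneg_left e2 hTpos.le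
    rw [e3] at e4
    have : 0 < (2:ℝ)^t * T.card := by positivity
    have e5 : T.card * (8 * (2:ℝ)^t) = 8 * (2^t * T.card) := by ring
    rw [e5] at e4
    linarith)
  refine ⟨Λ, hΛ, fun ρ7 h0 h7 => ?_⟩
  set V := bohr (Γ ∪ Λ) ρ7 with hV
  have hκ6e : κ6 = σ4 / (1568 * m * d ^ 2 * n * 2 ^ (h + 15)) := by
    rw [hκ6, hκ5, hMr]; push_cast; field_simp; norm_num
  set ξ : ℝ := 1 / 2^(h+12) with hξ
  have hvξ : ∀ v ∈ V, ∀ γ : AddChar G ℂ, (T.card : ℝ) ≤ 2 * ‖∑ x ∈ T, γ x‖ → ‖1 - γ v‖ ≤ ξ := by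
    intro v hv γ hγ
    obtain ⟨ψ, hψ, hb⟩ := hspec γ hγ
    have hvΓ : v ∈ bohr Γ κ6 := by
      rw [hκ6e]
      exact bohr_mono h7 (bohr_anti subset_union_left hv)
    have c1 := char_almost D6 (bohr Γ (ρ6 - κ6)) ψ v (M:ℝ) (by positivity)
      (bohr_mono (by linarith)) (fun x hx => by
        have := bohr_sub hx hvΓ
        rwa [sub_add_cancel] at this) hD6ne (by
        refine le_trans ?_ hreg6
        exact_mod_cast card_le_card (bohr_mono (by linarith))) hψ
    have c2 : ∑ l ∈ Λ, ‖1 - l v‖ ≤ n * ρ7 := by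
      have : ∀ l ∈ Λ, ‖1 - l v‖ ≤ ρ7 := fun l hl => mem_bohr.1 hv l (mem_union_right _ hl)
      refine (sum_le_card_nsmul _ _ _ this).trans ?_
      rw [nsmul_eq_mul]
      have : (Λ.card : ℝ) ≤ n := by exact_mod_cast hΛ
      gcongr
    have c3 : (n:ℝ) * ρ7 ≤ ξ / 2 := by
      rw [hξ]; exact arith1 n m d h σ4 ρ7 hσ2 hσ.le hn1 hm1 hdr h7
    have c4 : 4 / (M:ℝ) = ξ / 2 := by
      rw [hξ, hMr, pow_add, pow_add]; field_simp; norm_num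
    have := hb v
    linarith
  -- walk
  have hwalk := walk A X T S (1/(4000*m)) (1/(4000*m)) (by positivity) g hg m
    (fun j hj t t' h1 h2 x hx => hmem j hj t t' (fun i => hTD (h1 i)) (fun i => hTD (h2 i)) x hx)
  have hdens0 : 0.999 * (A.card : ℝ) ≤ ∑ x ∈ A, dens A S x := by
    have e1 : ∑ x ∈ A, dens A S x = ((A.card:ℝ)^2 - ∑ a ∈ A, ∑ a' ∈ A, if S (a - a') then 0 else (1:ℝ)) / A.card := by
      simp only [dens]
      rw [← sum_div]
      congr 1
      have : (A.card:ℝ)^2 = ∑ a ∈ A, ∑ a' ∈ A, (1:ℝ) := by simp; ring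
      rw [this, ← sum_sub_distrib]
      refine sum_congr rfl fun a _ => ?_
      rw [← sum_sub_distrib]
      refine sum_congr rfl fun a' _ => ?_
      by_cases hs : S (a - a') <;> simp [pind, hs]
    rw [e1, le_div_iff₀ hAc]
    have : 0.999 * (A.card:ℝ) * A.card = 0.999 * (A.card:ℝ)^2 := by ring
    rw [this]
    linarith
  have hw2 : ∀ p ∈ tup T m, 0.998 * (A.card : ℝ) ≤ ∑ x ∈ A, dens A S (x + ∑ i, (p.1 i - p.2 i)) := by
    intro p hp
    have := hwalk p.1 p.2 (mem_tup.1 hp).1 (mem_tup.1 hp).2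
    have e : (m:ℝ) * (2 * (1/(4000*m)) + 2 * (1/(4000*m))) = 0.001 := by
      field_simp; norm_num
    rw [e] at this
    linarith
  set g' : G → ℝ := fun x => if x ∈ X then dens A S x else 0 with hg'
  have hg'sq : ∑ y, g' y ^ 2 ≤ X.card := by
    have : ∀ y, g' y ^ 2 ≤ if y ∈ X then 1 else 0 := by
      intro y
      by_cases hy : y ∈ X
      · simp only [hg', hy, if_true]
        have h1 := dens_nonneg A S y
        have h2 : dens A S y ≤ 1 := dens_le A S y
        exact pow_le_one₀ h1 h2
      · simp [hg', hy]
    refine (sum_le_sum fun y _ => this y).trans ?_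
    simp
  have hXA2 : (∑ y, g' y ^ 2 + A.card) / 2 ≤ 2^(h+1) * A.card := by
    have : (A.card:ℝ) ≤ X.card := by exact_mod_cast card_le_card hAX
    linarith
  set W : ℝ := (((tup T m).card : ℕ) : ℝ) with hW
  have hWpos : 0 < W := by
    rw [hW, card_tup]; push_cast; positivity
  have hmain : ∀ v ∈ V, 0.996 * (W * A.card) ≤ ∑ x ∈ A, ∑ p ∈ tup T m, dens A S (x + ∑ i, (p.1 i - p.2 i) + v) := by
    intro v hv
    have f1 := fourier_stable A T g' m v ξ (by positivity) (hvξ v hv)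
    have f2 : (ξ + 2 / 4 ^ m) * (tup T m).card * ((∑ y, g' y ^ 2 + A.card) / 2) ≤ 0.002 * (W * A.card) := by
      have a0 : (0:ℝ) ≤ (ξ + 2 / 4 ^ m) * W := by positivity
      refine (mul_le_mul_of_nonneg_left hXA2 a0).trans ?_
      have a1 : (ξ + 2 / 4^m) * 2^(h+1) ≤ 0.002 := by
        have b1 : ξ * 2^(h+1) = 1/2048 := by
          rw [hξ, pow_add, pow_add]; field_simp; norm_num
        have b2 : (2:ℝ) / 4^m * 2^(h+1) ≤ 1/2048 := by
          have : (4:ℝ)^m = 2^(h+1) * 2^(h+25) := by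
            rw [hm13, ← pow_add, show (4:ℝ) = 2^2 by norm_num, ← pow_mul]; congr 1; ring
          rw [this]
          have c : (2:ℝ) / (2^(h+1) * 2^(h+25)) * 2^(h+1) = 2 / 2^(h+25) := by field_simp
          rw [c, div_le_div_iff₀ (by positivity) (by positivity), pow_add]
          have : (1:ℝ) ≤ 2^h := one_le_pow₀ (by norm_num)
          norm_num; linarith
        rw [add_mul]; linarith [b1, b2]
      calc (ξ + 2 / 4 ^ m) * W * (2 ^ (h + 1) * A.card) = ((ξ + 2 / 4^m) * 2^(h+1)) * (W * A.card) := by ring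
        _ ≤ 0.002 * (W * A.card) := by gcongr
    have f3 : 0.998 * (W * A.card) ≤ ∑ x ∈ A, ∑ p ∈ tup T m, g' (x + ∑ i, (p.1 i - p.2 i)) := by
      rw [sum_comm]
      have : ∀ p ∈ tup T m, 0.998 * (A.card : ℝ) ≤ ∑ x ∈ A, g' (x + ∑ i, (p.1 i - p.2 i)) := by
        intro p hp
        refine (hw2 p hp).trans (le_of_eq (sum_congr rfl fun x hx => ?_))
        have := hmem m le_rfl p.1 p.2 (fun i => hTD ((mem_tup.1 hp).1 i)) (fun i => hTD ((mem_tup.1 hp).2 i)) x hx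
        simp only [hg', this, if_true]
      have := card_nsmul_le_sum _ _ _ this
      rw [nsmul_eq_mul] at this
      rw [hW]; linarith
    have f4 : ∑ x ∈ A, ∑ p ∈ tup T m, g' (x + ∑ i, (p.1 i - p.2 i) + v) ≤ ∑ x ∈ A, ∑ p ∈ tup T m, dens A S (x + ∑ i, (p.1 i - p.2 i) + v) := by
      refine sum_le_sum fun x _ => sum_le_sum fun p _ => ?_
      simp only [hg']
      split_ifs
      · exact le_rfl
      · exact dens_nonneg A S _
    have := (abs_le.1 f1).1
    linarith
  -- averaging
  have hsum := card_nsmul_le_sum _ _ _ hmain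
  rw [nsmul_eq_mul] at hsum
  have hre : ∑ v ∈ V, ∑ x ∈ A, ∑ p ∈ tup T m, dens A S (x + ∑ i, (p.1 i - p.2 i) + v) =
      (∑ x ∈ A, ∑ p ∈ tup T m, ∑ a ∈ A, ∑ v ∈ V, pind S ((x + ∑ i, (p.1 i - p.2 i) - a) + v)) / A.card := by
    rw [sum_comm, sum_div]
    refine sum_congr rfl fun x _ => ?_
    rw [sum_comm, sum_div]
    refine sum_congr rfl fun p _ => ?_
    simp only [dens]
    rw [← sum_div, sum_comm]
    congr 1
    refine sum_congr rfl fun a _ => sum_congr rfl fun v _ => ?_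
    congr 1; abel
  by_contra hcon
  push Not at hcon
  have hlt : ∑ x ∈ A, ∑ p ∈ tup T m, ∑ a ∈ A, ∑ v ∈ V, pind S ((x + ∑ i, (p.1 i - p.2 i) - a) + v) <
      ∑ x ∈ A, ∑ p ∈ tup T m, ∑ a ∈ A, 0.996 * (V.card : ℝ) := by
    have hTn : (tup T m).Nonempty := by
      rw [← card_pos]; rw [hW] at hWpos; exact_mod_cast hWpos
    exact sum_lt_sum_of_nonempty hne fun x _ => sum_lt_sum_of_nonempty hTn fun p _ =>
      sum_lt_sum_of_nonempty hne fun a _ => hcon _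
  rw [hre, le_div_iff₀ hAc] at hsum
  simp only [sum_const, nsmul_eq_mul] at hlt
  rw [← hW] at hlt
  linarith
end KM
end

section
namespace KM
open Finset
open scoped Classical
set_option linter.unusedSectionVars false

variable {G : Type*} [AddCommGroup G] [Fintype G]

lemma exists_half (h2 : Function.Injective (fun x : G => x + x)) (Γ : Finset (AddChar G ℂ)) :
    ∃ Γ' : Finset (AddChar G ℂ), Γ'.card ≤ Γ.card ∧ (∀ ρ x, x + x ∈ bohr Γ' ρ ↔ x ∈ bohr Γ ρ) ∧
      (∀ ρ, bohr Γ' ρ ⊆ bohr Γ (ρ + ρ)) ∧ ∀ ρ, (bohr Γ' ρ).card = (bohr Γ ρ).card := by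
  have hb : Function.Bijective (fun x : G => x + x) := Finite.injective_iff_bijective.1 h2
  set e : G ≃+ G := AddEquiv.ofBijective (AddMonoidHom.mk' (fun x : G => x + x) (by intro a b; abel)) hb with he
  have hex : ∀ x, e x = x + x := fun x => rfl
  set Γ' := Γ.image (fun γ => γ.compAddMonoidHom e.symm.toAddMonoidHom) with hΓ'
  have h1 : ∀ ρ x, x + x ∈ bohr Γ' ρ ↔ x ∈ bohr Γ ρ := by
    intro ρ x
    rw [mem_bohr, mem_bohr, hΓ', forall_mem_image]
    refine forall₂_congr fun γ _ => ?_
    have : (γ.compAddMonoidHom e.symm.toAddMonoidHom) (x + x) = γ x := by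
      rw [← hex, AddChar.compAddMonoidHom_apply]
      congr 1
      exact e.symm_apply_apply x
    rw [this]
  refine ⟨Γ', card_image_le, h1, ?_, fun ρ => ?_⟩
  swap
  · rw [← card_image_of_injective (bohr Γ ρ) h2]
    congr 1
    ext x
    rw [mem_image]
    constructor
    · intro hx
      obtain ⟨y, rfl⟩ := hb.2 x
      exact ⟨y, (h1 ρ y).1 hx, rfl⟩
    · rintro ⟨y, hy, rfl⟩
      exact (h1 ρ y).2 hy
  intro ρ x hx
  obtain ⟨y, rfl⟩ := hb.2 x
  have := (h1 ρ y).1 hx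
  exact bohr_add this this

/-- convolution of the balanced function along a near-automorphism of `B` -/
lemma balanced (B Bm A : Finset G) (hA : A ⊆ B) (hBm : Bm ⊆ B) (hBne : B.Nonempty) (e : G ≃ G)
    (he : ∀ x ∈ Bm, e x ∈ B) (he' : ∀ x ∈ Bm, e.symm x ∈ B) (M : ℝ) (hM : 0 < M)
    (hc : (B.card : ℝ) ≤ (1 + 1 / M) * Bm.card) (f : G → ℝ) (α : ℝ) (hα : α * B.card = A.card) (hα0 : 0 ≤ α)
    (hf : ∀ x, f x = ind A x - α * ind B x) :
    |∑ y, ind A y * ind A (e y) - α * A.card - ∑ y, f y * f (e y)| ≤ 2 * A.card / M := by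
  have hBc : (0:ℝ) < B.card := by exact_mod_cast hBne.card_pos
  have hgap : (B.card : ℝ) - Bm.card ≤ B.card / M := by
    have h1 : (1 + 1 / M) * Bm.card = Bm.card + Bm.card / M := by ring
    have h2 : (Bm.card : ℝ) ≤ B.card := by exact_mod_cast card_le_card hBm
    have : (Bm.card : ℝ) / M ≤ B.card / M := by gcongr
    linarith
  have gen : ∀ (E : Finset G) (e : G ≃ G), E ⊆ B → (∀ x ∈ Bm, e x ∈ B) →
      (E.card : ℝ) - B.card / M ≤ ∑ y, ind E y * ind B (e y) ∧ ∑ y, ind E y * ind B (e y) ≤ E.card := by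
    intro E e hE he
    have h0 : ∑ y, ind E y * ind B (e y) = ∑ y ∈ E, ind B (e y) := by
      simp only [ind, ite_mul, one_mul, zero_mul, sum_ite_mem, univ_inter]
    have h1 : (E.card : ℝ) - ∑ y ∈ E, ind B (e y) = ∑ y ∈ E, (1 - ind B (e y)) := by
      rw [sum_sub_distrib]; simp
    have h2 : ∑ y ∈ E, (1 - ind B (e y)) ≤ ∑ y ∈ B, (1 - ind Bm y) := by
      have : ∀ y, 1 - ind B (e y) ≤ 1 - ind Bm y := by
        intro y
        by_cases hy : y ∈ Bm
        · simp [ind, hy, he y hy]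
        · simp only [ind, hy, if_false]; split_ifs <;> norm_num
      refine (sum_le_sum fun y _ => this y).trans (sum_le_sum_of_subset_of_nonneg hE fun y _ _ => ?_)
      simp only [ind]; split_ifs <;> norm_num
    have h3 : ∑ y ∈ B, (1 - ind Bm y) = B.card - Bm.card := by
      rw [sum_sub_distrib]
      simp only [sum_const, nsmul_eq_mul, mul_one]
      congr 1
      simp only [ind]
      rw [sum_ite_mem, inter_eq_right.2 hBm]; simp
    have h4 : 0 ≤ ∑ y ∈ E, (1 - ind B (e y)) := sum_nonneg fun y _ => by
      simp only [ind]; split_ifs <;> norm_num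
    constructor <;> linarith
  obtain ⟨a1, a2⟩ := gen A e hA he
  obtain ⟨b1, b2⟩ := gen A e.symm hA he'
  obtain ⟨c1, c2⟩ := gen B e le_rfl he
  have hb : ∑ y, ind A y * ind B (e.symm y) = ∑ y, ind B y * ind A (e y) := by
    rw [← Equiv.sum_comp e]
    simp [mul_comm]
  rw [hb] at b1 b2
  have hexp : ∑ y, f y * f (e y) = ∑ y, ind A y * ind A (e y) - α * ∑ y, ind A y * ind B (e y)
      - α * ∑ y, ind B y * ind A (e y) + α^2 * ∑ y, ind B y * ind B (e y) := by
    simp only [mul_sum, ← sum_sub_distrib, ← sum_add_distrib]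
    refine sum_congr rfl fun y _ => ?_
    rw [hf, hf]; ring
  rw [hexp]
  set P := ∑ y, ind A y * ind B (e y)
  set Q := ∑ y, ind B y * ind A (e y)
  set R := ∑ y, ind B y * ind B (e y)
  have e1 : 2 * (A.card:ℝ) / M = 2 * α * (B.card / M) := by rw [← hα]; ring
  rw [e1]
  have hα1 : α ≤ 1 := by
    have : (A.card : ℝ) ≤ B.card := by exact_mod_cast card_le_card hA
    by_contra h; push Not at h; nlinarith
  have hz : 0 ≤ (B.card:ℝ)/M := by positivity
  set z := (B.card:ℝ)/M
  have u1 : α * (A.card - z) ≤ α * P := mul_le_mul_of_nonneg_left a1 hα0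
  have u2 : α * P ≤ α * A.card := mul_le_mul_of_nonneg_left a2 hα0
  have u3 : α * (A.card - z) ≤ α * Q := mul_le_mul_of_nonneg_left b1 hα0
  have u4 : α * Q ≤ α * A.card := mul_le_mul_of_nonneg_left b2 hα0
  have u5 : α^2 * (B.card - z) ≤ α^2 * R := mul_le_mul_of_nonneg_left c1 (by positivity)
  have u6 : α^2 * R ≤ α^2 * B.card := mul_le_mul_of_nonneg_left c2 (by positivity)
  have e2 : α^2 * B.card = α * A.card := by rw [← hα]; ring
  have e3 : α^2 * z ≤ α * z := by
    have : α^2 ≤ α := by nlinarith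
    exact mul_le_mul_of_nonneg_right this hz
  have e4 : 0 ≤ α * z := by positivity
  rw [abs_le]
  constructor <;> nlinarith

lemma moment_avg (D3 D3p D4 : Finset G) (F : G → ℝ) (hF : ∀ x, 0 ≤ F x)
    (hsub : ∀ t ∈ D3, ∀ b ∈ D4, ∀ b' ∈ D4, t - b + b' ∈ D3p) (hne : D3p.Nonempty)
    (hc2 : (D3p.card : ℝ) ≤ 2 * D3.card) (c : ℝ) (hc : 0 ≤ c) (hD3 : D3.card * c ≤ ∑ x ∈ D3, F x) :
    ∃ t, (D4.card : ℝ)^2 * (c / 2) ≤ ∑ b ∈ D4, ∑ b' ∈ D4, F (t + b - b') := by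
  by_contra hcon
  push Not at hcon
  have h1 : ∑ t ∈ D3p, ∑ b ∈ D4, ∑ b' ∈ D4, F (t + b - b') < ∑ t ∈ D3p, (D4.card : ℝ)^2 * (c/2) :=
    sum_lt_sum_of_nonempty hne fun t _ => hcon t
  have h2 : ∑ b ∈ D4, ∑ b' ∈ D4, ∑ t ∈ D3, F t ≤ ∑ t ∈ D3p, ∑ b ∈ D4, ∑ b' ∈ D4, F (t + b - b') := by
    rw [sum_comm (s := D3p)]
    refine sum_le_sum fun b hb => ?_
    rw [sum_comm (s := D3p)]
    refine sum_le_sum fun b' hb' => ?_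
    refine le_trans (le_of_eq ?_) (sum_le_sum_of_subset_of_nonneg (s := D3.image (fun t => t - b + b')) ?_ ?_)
    · rw [sum_image (fun a _ b _ h => by simpa using h)]
      refine sum_congr rfl fun t _ => ?_
      congr 1; abel
    · intro x hx
      obtain ⟨t, ht, rfl⟩ := mem_image.1 hx
      exact hsub t ht b hb b' hb'
    · intro x _ _; exact hF _
  simp only [sum_const, nsmul_eq_mul] at h1 h2
  have h3 : (D4.card:ℝ)^2 * (D3.card * c) ≤ D4.card * (D4.card * ∑ t ∈ D3, F t) := by
    have := mul_le_mul_of_nonneg_left hD3 (by positivity : (0:ℝ) ≤ (D4.card:ℝ)^2)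
    linarith
  have h4 : (D3p.card:ℝ) * ((D4.card:ℝ)^2 * (c/2)) ≤ 2 * D3.card * ((D4.card:ℝ)^2 * (c/2)) :=
    mul_le_mul_of_nonneg_right hc2 (by positivity)
  linarith

def pp (L : ℕ) : ℕ := 2 * (L + 2)
def qq (L : ℕ) : ℕ := 33 * (19 + 4 * pp L)
def hh (L : ℕ) : ℕ := (L + 1) * qq L + 2

lemma num_pq (p q : ℕ) (hq : q = 33 * (19 + 4 * p)) :
    2000 * (65/64:ℝ)^q ≤ (67/64)^(q-(p+1)) * (1/8)^(p+1) / 16 := by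
  have hqp : q = (q - (p+1)) + (p+1) := by omega
  have h1 : (2:ℝ)^(19+4*p) ≤ (67/65)^q := by
    rw [hq, pow_mul]
    have : (2:ℝ) ≤ (67/65)^33 := by norm_num
    gcongr
  have h2 : (67/64:ℝ)^q = (65/64)^q * (67/65)^q := by rw [← mul_pow]; norm_num
  have h3 : (67/64:ℝ)^q = (67/64)^(q-(p+1)) * (67/64)^(p+1) := by rw [← pow_add, ← hqp]
  have h4 : (67/64:ℝ)^(p+1) ≤ 2^(p+1) := by gcongr; norm_num
  have h5 : (1/8:ℝ)^(p+1) * 8^(p+1) = 1 := by rw [← mul_pow]; norm_num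
  set a := (67/64:ℝ)^(q-(p+1))
  have ha : 0 < a := by positivity
  have h6 : (65/64:ℝ)^q * 2^(19+4*p) ≤ a * 2^(p+1) := by
    calc _ ≤ (65/64:ℝ)^q * (67/65)^q := by gcongr
      _ = a * (67/64)^(p+1) := by rw [← h2, h3]
      _ ≤ _ := by gcongr
  have h7 : (2:ℝ)^(19+4*p) = 2^15 * 2^(p+1) * 8^(p+1) := by
    rw [show (8:ℝ) = 2^3 by norm_num, ← pow_mul, ← pow_add, ← pow_add]; congr 1; ring
  rw [h7] at h6
  have hp1 : (0:ℝ) < 2^(p+1) := by positivity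
  have h8 : (65/64:ℝ)^q * 2^15 * 8^(p+1) ≤ a := by
    have : ((65/64:ℝ)^q * 2^15 * 8^(p+1)) * 2^(p+1) ≤ a * 2^(p+1) := by linarith
    exact le_of_mul_le_mul_right this hp1
  have h9 := mul_le_mul_of_nonneg_right h8 (by positivity : (0:ℝ) ≤ (1/8)^(p+1))
  have h10 : (65/64:ℝ)^q * 2^15 * 8^(p+1) * (1/8)^(p+1) = (65/64:ℝ)^q * 2^15 := by
    rw [mul_assoc, mul_comm ((8:ℝ)^(p+1)), h5, mul_one]
  rw [h10] at h9
  have : (0:ℝ) < (65/64)^q := by positivity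
  linarith

set_option maxHeartbeats 2000000 in
lemma get_sift (A : Finset G) (h2 : Function.Injective (fun x : G => x + x))
    (hAP : ∀ x ∈ A, ∀ y ∈ A, ∀ z ∈ A, x + y = z + z → x = y)
    (Γ Γ' : Finset (AddChar G ℂ)) (hΓ1 : ∀ ρ x, x + x ∈ bohr Γ' ρ ↔ x ∈ bohr Γ ρ)
    (hΓ2 : ∀ ρ, bohr Γ' ρ ⊆ bohr Γ (ρ + ρ)) (hΓ3 : ∀ ρ, (bohr Γ' ρ).card = (bohr Γ ρ).card)
    (L : ℕ) (ρ1 σ1 ρ2 σ2 ρ4 : ℝ) (hσ1 : 0 ≤ σ1) (hρ1 : 0 ≤ ρ1) (hρ2 : 0 ≤ ρ2) (hρ2' : ρ2 + ρ2 ≤ σ1) (hρ4 : 0 ≤ ρ4)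
    (hρ4' : ρ4 + ρ4 ≤ σ2) (hρ4'' : 4 * ρ4 ≤ σ1)
    (hreg1 : ((bohr Γ ρ1).card : ℝ) ≤ (1 + 1/2^(L+9)) * (bohr Γ (ρ1 - σ1)).card)
    (hreg2 : ((bohr Γ (ρ2 + σ2)).card : ℝ) ≤ 2 * (bohr Γ ρ2).card)
    (A1 : Finset G) (hA1 : A1 = A ∩ bohr Γ ρ1) (α : ℝ) (hα : α * (bohr Γ ρ1).card = A1.card)
    (hαL : 1 / 2^(L+1) ≤ α) (hA2 : 1/2^(L+1) * ((bohr Γ ρ2).card : ℝ) ≤ (A ∩ bohr Γ ρ2).card)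
    (hbig : (4:ℝ) * 4^(L+1) ≤ (bohr Γ ρ1).card) :
    ∃ A' ⊆ bohr Γ' ρ4, A'.Nonempty ∧ ((bohr Γ' ρ4).card : ℝ) ≤ 2^(hh L) * A'.card ∧
      1000 * (∑ a ∈ A', ∑ a' ∈ A', if 65/64*(α*A1.card) ≤ corr (ind A1) (a - a') then 0 else (1 : ℝ)) ≤ (A'.card : ℝ) ^ 2 := by
  obtain ⟨p, hp⟩ : ∃ p, p = pp L := ⟨_, rfl⟩
  obtain ⟨q, hq⟩ : ∃ q, q = qq L := ⟨_, rfl⟩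
  have hq' : q = 33 * (19 + 4 * p) := by rw [hq, hp]; rfl
  have hp' : p = 2 * (L + 2) := hp
  have hpe : Even p := ⟨L+2, by omega⟩
  set B := bohr Γ ρ1 with hB
  have hBne : B.Nonempty := ⟨0, bohr_zero_mem hρ1⟩
  have hα0 : 0 < α := lt_of_lt_of_le (by positivity) hαL
  set w := α * A1.card with hw
  have hw4 : 4 ≤ w := by
    have e : w = α^2 * B.card := by rw [hw, ← hα]; ring
    have h1 : (1/2^(L+1))^2 ≤ α^2 := by gcongr
    have h2 : ((1:ℝ)/2^(L+1))^2 * (4 * 4^(L+1)) = 4 := by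
      rw [div_pow, ← pow_mul, mul_comm (L+1) 2, pow_mul]; norm_num; field_simp
    rw [e, ← h2]
    exact mul_le_mul h1 hbig (by positivity) (by positivity)
  have hw0 : 0 < w := by linarith
  set f : G → ℝ := fun x => ind A1 x - α * ind B x with hf
  have herr : 2 * (A1.card:ℝ) / 2^(L+9) ≤ w / 100 := by
    have : (1:ℝ)/2^(L+1) * 100 * (2^(L+9)) = 25600 := by
      rw [pow_add, pow_add]; field_simp; norm_num
    rw [div_le_div_iff₀ (by positivity) (by norm_num), hw]
    have h1 := mul_le_mul_of_nonneg_right hαL (by positivity : (0:ℝ) ≤ 100 * 2^(L+9))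
    have h3 : (200:ℝ) ≤ α * 2^(L+9) := by linarith
    have := mul_le_mul_of_nonneg_right h3 (by positivity : (0:ℝ) ≤ A1.card)
    linarith
  have hA1B : A1 ⊆ B := by rw [hA1]; exact inter_subset_right
  have hcnv : ∀ u ∈ bohr Γ σ1, |cnv (ind A1) u - w - cnv f u| ≤ w / 100 := by
    intro u hu
    refine le_trans ?_ herr
    refine balanced B (bohr Γ (ρ1 - σ1)) A1 hA1B (bohr_mono (by linarith)) hBne (Equiv.subLeft u) ?_ ?_
      (2^(L+9)) (by positivity) hreg1 f α hα hα0.le (fun x => rfl)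
    · intro x hx
      have := bohr_sub hu hx
      rwa [add_sub_cancel] at this
    · intro x hx
      have := bohr_add (bohr_neg hx) hu
      rw [sub_add_cancel] at this
      simpa [Equiv.subLeft] using this
  have hcorr : ∀ u ∈ bohr Γ σ1, |corr (ind A1) u - w - corr f u| ≤ w / 100 := by
    intro u hu
    refine le_trans ?_ herr
    refine balanced B (bohr Γ (ρ1 - σ1)) A1 hA1B (bohr_mono (by linarith)) hBne (Equiv.addRight u) ?_ ?_
      (2^(L+9)) (by positivity) hreg1 f α hα hα0.le (fun x => rfl)
    · intro x hx
      have := bohr_add hx hu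
      rwa [sub_add_cancel] at this
    · intro x hx
      have := bohr_sub hx hu
      rw [sub_add_cancel] at this
      simpa [sub_eq_add_neg] using this
  -- moments on D3
  set D3 := bohr Γ' ρ2 with hD3
  set D4 := bohr Γ' ρ4 with hD4
  have hpt : ∀ z ∈ A ∩ bohr Γ ρ2, (w/2)^p ≤ cnv f (z + z) ^ p := by
    intro z hz
    rw [mem_inter] at hz
    have h1 : cnv (ind A1) (z + z) ≤ 1 := by
      have : ∀ y, ind A1 y * ind A1 (z + z - y) ≤ if y = z then 1 else 0 := by
        intro y
        by_cases hy : y ∈ A1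
        · by_cases hy' : z + z - y ∈ A1
          · have e := hAP y (by rw [hA1] at hy; exact (mem_inter.1 hy).1) (z+z-y)
              (by rw [hA1] at hy'; exact (mem_inter.1 hy').1) z hz.1 (by abel)
            have : y = z := h2 (by
              show y + y = z + z
              nth_rewrite 1 [e]; abel)
            simp [ind, this]; split_ifs <;> norm_num
          · simp only [ind, hy', if_false, mul_zero]; split_ifs <;> norm_num
        · simp only [ind, hy, if_false, zero_mul]; split_ifs <;> norm_num
      refine (sum_le_sum fun y _ => this y).trans ?_
      simp
    have h3 := (abs_le.1 (hcnv (z+z) (bohr_mono hρ2' (bohr_add hz.2 hz.2)))).1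
    have h4 : w/2 ≤ - cnv f (z+z) := by
      have := (abs_le.1 (hcnv (z+z) (bohr_mono hρ2' (bohr_add hz.2 hz.2)))).1
      linarith
    rw [← hpe.neg_pow (cnv f (z+z))]
    gcongr
  have hF0 : ∀ x, 0 ≤ cnv f x ^ p := fun x => hpe.pow_nonneg _
  have hD3m : (D3.card:ℝ) * (w/4)^p ≤ ∑ x ∈ D3, cnv f x ^ p := by
    have s1 : ∑ z ∈ A ∩ bohr Γ ρ2, cnv f (z+z)^p ≤ ∑ x ∈ D3, cnv f x ^ p := by
      refine le_trans (le_of_eq ?_) (sum_le_sum_of_subset_of_nonneg (s := (A ∩ bohr Γ ρ2).image (fun z => z + z)) ?_ (fun x _ _ => hF0 x))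
      · rw [sum_image (fun a _ b _ h => h2 h)]
      · intro x hx
        obtain ⟨z, hz, rfl⟩ := mem_image.1 hx
        exact (hΓ1 ρ2 z).2 (mem_inter.1 hz).2
    have s2 := card_nsmul_le_sum _ _ _ hpt
    rw [nsmul_eq_mul] at s2
    refine le_trans ?_ (s2.trans s1)
    have s3 : (w/4)^p ≤ 1/2^(L+1) * (w/2)^p := by
      have : (w/4)^p = (w/2)^p * (1/2)^p := by rw [← mul_pow]; ring
      rw [this, mul_comm]
      refine mul_le_mul_of_nonneg_right ?_ (by positivity)
      rw [one_div_pow]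
      exact one_div_le_one_div_of_le (by positivity) (pow_le_pow_right₀ (by norm_num) (by omega))
    calc (D3.card:ℝ) * (w/4)^p ≤ D3.card * (1/2^(L+1) * (w/2)^p) := by gcongr
      _ = (1/2^(L+1) * D3.card) * (w/2)^p := by ring
      _ ≤ _ := by
        rw [hD3, hΓ3]
        gcongr
  obtain ⟨t, ht⟩ := moment_avg D3 (bohr Γ' (ρ2 + σ2)) D4 (fun x => cnv f x ^ p) hF0
    (by
      intro t ht b hb b' hb'
      refine bohr_mono ?_ (bohr_add (bohr_sub ht hb) hb')
      linarith) ⟨0, bohr_zero_mem (by linarith)⟩ (by rw [hΓ3, hD3, hΓ3]; exact hreg2) ((w/4)^p) (by positivity) hD3m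
  have ht2 := ht.trans (cnv_moment_le D4 f p t)
  -- unbalance
  have hmemD : ∀ b ∈ D4, ∀ b' ∈ D4, b - b' ∈ bohr Γ σ1 := by
    intro b hb b' hb'
    refine bohr_mono ?_ (hΓ2 _ (bohr_sub hb hb'))
    linarith
  have hub := unbalance (D4 ×ˢ D4) (fun i => corr f (i.1 - i.2) / w) (fun i => corr (ind A1) (i.1 - i.2) / w)
    p q hpe (by omega) (by omega) (by
      rw [sum_product]
      simp only [div_pow, ← sum_div]
      exact div_nonneg (moment_nonneg _ _ _) (by positivity)) (by
      rw [sum_product]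
      simp only [div_pow, ← sum_div]
      rw [le_div_iff₀ (by positivity), card_product]
      refine le_trans ?_ ht2
      push_cast
      have : (w/4)^p / 2 = (w/4)^p * (1/2) := by ring
      have h3 : (1/2:ℝ)^p ≤ 1/2 := by
        have := pow_le_pow_of_le_one (by norm_num : (0:ℝ) ≤ 1/2) (by norm_num) (by omega : 1 ≤ p)
        simpa using this
      have h4 : (1^p/8^p) * w^p = (w/4)^p * (1/2)^p := by rw [← div_pow, ← mul_pow, ← mul_pow]; ring
      calc (D4.card:ℝ) * D4.card * (1^p/8^p) * w^p = D4.card^2 * ((1^p/8^p) * w^p) := by ring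
        _ = D4.card^2 * ((w/4)^p * (1/2)^p) := by rw [h4]
        _ ≤ D4.card^2 * ((w/4)^p / 2) := by
          rw [this]; gcongr) (fun i _ => div_nonneg (corr_ind_nonneg _ _) hw0.le) (by
      intro i hi
      rw [mem_product] at hi
      have := hcorr _ (hmemD i.1 hi.1 i.2 hi.2)
      have e : corr (ind A1) (i.1 - i.2) / w - 1 - corr f (i.1 - i.2) / w =
        (corr (ind A1) (i.1 - i.2) - w - corr f (i.1 - i.2)) / w := by field_simp
      rw [e, abs_div, abs_of_pos hw0, div_le_iff₀ hw0]
      linarith)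
  rw [sum_product] at hub
  simp only [div_pow, ← sum_div] at hub
  rw [le_div_iff₀ (by positivity), card_product] at hub
  push_cast at hub
  have hnum := num_pq p q hq'
  have hD4c : (0:ℝ) < D4.card := by exact_mod_cast bohr_card_pos hρ4
  have hlow : 2000 * ((D4.card:ℝ)^2 * (65/64*w)^q) ≤ ∑ b ∈ D4, ∑ b' ∈ D4, corr (ind A1) (b - b')^q := by
    refine le_trans ?_ hub
    calc 2000 * ((D4.card:ℝ)^2 * (65/64*w)^q) = (D4.card^2 * w^q) * (2000 * (65/64)^q) := by rw [mul_pow]; ring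
      _ ≤ (D4.card^2 * w^q) * ((67/64)^(q-(p+1)) * (1/8)^(p+1) / 16) := by gcongr
      _ = _ := by simp only [div_pow]; ring
  obtain ⟨A', hA', hne, hη, hbad⟩ := sift A1 D4 (fun u => 65/64*w ≤ corr (ind A1) u) (65/64*w) (α^q/4) q
    (by positivity) (by positivity) (fun u hu => (not_le.1 hu).le) hlow (by
      refine lt_of_lt_of_le ?_ hlow
      have e : 2 * (α^q/4 * (D4.card:ℝ)^2 * A1.card^q) = (D4.card:ℝ)^2 * w^q * (1/2) := by
        rw [hw, mul_pow]; ring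
      have e2 : 2000 * ((D4.card:ℝ)^2 * (65/64*w)^q) = (D4.card:ℝ)^2 * w^q * (2000 * (65/64)^q) := by
        rw [mul_pow]; ring
      rw [e, e2]
      refine mul_lt_mul_of_pos_left ?_ (by positivity)
      have : (1:ℝ) ≤ (65/64)^q := one_le_pow₀ (by norm_num)
      linarith)
  refine ⟨A', hA', hne, ?_, hbad⟩
  have k1 : (1:ℝ) ≤ 2^(hh L) * (α^q/4) := by
    have a1 : (1/2^(L+1))^q ≤ α^q := by gcongr
    have a2 : (2:ℝ)^(hh L) = (2^(L+1))^q * 4 := by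
      rw [hh, ← hq, pow_add, pow_mul]; norm_num
    rw [a2]
    have a3 : ((2:ℝ)^(L+1))^q * (1/2^(L+1))^q = 1 := by
      rw [← mul_pow]
      have : (2:ℝ)^(L+1) * (1/2^(L+1)) = 1 := by field_simp
      rw [this, one_pow]
    have := mul_le_mul_of_nonneg_left a1 (by positivity : (0:ℝ) ≤ (2^(L+1))^q)
    linarith
  calc (D4.card:ℝ) = 1 * D4.card := by ring
    _ ≤ 2^(hh L) * (α^q/4) * D4.card := by gcongr
    _ = 2^(hh L) * (α^q/4 * D4.card) := by ring
    _ ≤ _ := by gcongr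
end KM
end

section
open Finset
open scoped Classical
namespace KM
set_option linter.unusedSectionVars false
variable {G : Type*} [AddCommGroup G] [Fintype G]

lemma bohr_card_mono (Γ : Finset (AddChar G ℂ)) {ρ σ : ℝ} (h : ρ ≤ σ) :
    ((bohr Γ ρ).card : ℝ) ≤ (bohr Γ σ).card := by
  have := card_le_card (bohr_mono (Γ := Γ) h)
  exact_mod_cast this

set_option maxHeartbeats 1000000 in
lemma incr1 (A : Finset G) (h2 : Function.Injective (fun x : G => x + x))
    (hAP : ∀ x ∈ A, ∀ y ∈ A, ∀ z ∈ A, x + y = z + z → x = y)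
    (Γ : Finset (AddChar G ℂ)) (d : ℕ) (hd : Γ.card ≤ d) (hd1 : 1 ≤ d)
    (L : ℕ) (ρ1 σ1 ρ2 σ2 : ℝ) (hσ1 : 0 ≤ σ1) (hρ1 : 0 ≤ ρ1) (hρ2 : 0 ≤ ρ2) (hρ2' : ρ2 + ρ2 ≤ σ1)
    (hσ2 : 0 < σ2) (hσ21 : σ2 ≤ σ1) (hσ22 : σ2 ≤ 2)
    (hreg1 : ((bohr Γ ρ1).card : ℝ) ≤ (1 + 1/2^(L+9)) * (bohr Γ (ρ1 - σ1)).card)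
    (hreg2 : ((bohr Γ (ρ2 + σ2)).card : ℝ) ≤ 2 * (bohr Γ ρ2).card)
    (A1 : Finset G) (hA1 : A1 = A ∩ bohr Γ ρ1) (α : ℝ) (hα : α * (bohr Γ ρ1).card = A1.card)
    (hαL : 1 / 2^(L+1) ≤ α) (hA2 : 1/2^(L+1) * ((bohr Γ ρ2).card : ℝ) ≤ (A ∩ bohr Γ ρ2).card)
    (hbig : (4:ℝ) * 4^(L+1) ≤ (bohr Γ ρ1).card) :
    ∃ Γ2 : Finset (AddChar G ℂ), Γ2.card ≤ d + nn (hh L) ∧ ∀ ρ7 : ℝ, 0 ≤ ρ7 →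
      ρ7 ≤ σ2 / (112 * d) / (1568 * mm (hh L) * d ^ 2 * nn (hh L) * 2 ^ (hh L + 15)) →
      ∃ x, 1.011 * α * ((bohr Γ2 ρ7).card : ℝ) ≤ ((bohr Γ2 ρ7).filter (fun v => x + v ∈ A1)).card := by
  obtain ⟨Γ', hc, hΓ1, hΓ2, hΓ3⟩ := exists_half h2 Γ
  have hd' : Γ'.card ≤ d := hc.trans hd
  have hdR : (1:ℝ) ≤ d := by exact_mod_cast hd1
  obtain ⟨ρ4, -, hr2, hr3, hr4⟩ := exists_regular Γ' hd' hd1 (le_refl 1) (by positivity : 0 < σ2/4)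
  have e : σ2/4/(28*(d:ℝ)*((1:ℕ):ℝ)) = σ2/(112*d) := by
    push_cast; field_simp; norm_num
  rw [e] at hr3 hr4
  have hpos : 0 < σ2/(112*d) := by positivity
  have hle : σ2/(112*d) ≤ 2 := by
    rw [div_le_iff₀ (by positivity)]; nlinarith
  obtain ⟨A', hA', hne, hcard, hbad⟩ := get_sift A h2 hAP Γ Γ' hΓ1 hΓ2 hΓ3 L ρ1 σ1 ρ2 σ2 ρ4 hσ1 hρ1 hρ2 hρ2'
    (by linarith) (by linarith) (by linarith) hreg1 hreg2 A1 hA1 α hα hαL hA2 hbig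
  have hX : ((bohr Γ' (ρ4 + σ2/(112*d))).card : ℝ) ≤ 2 * (bohr Γ' ρ4).card := by
    refine hr4.trans ?_
    have : ((bohr Γ' (ρ4 - σ2/(112*d))).card : ℝ) ≤ (bohr Γ' ρ4).card :=
      bohr_card_mono _ (by linarith)
    push_cast
    linarith
  obtain ⟨Λ, hΛ, hcore⟩ := core Γ' d hd' hd1 ρ4 (σ2/(112*d)) hpos hle hX A' hA' hne (hh L) hcard
    (fun u => 65/64*(α*A1.card) ≤ corr (ind A1) u) hbad
  refine ⟨Γ' ∪ Λ, (card_union_le _ _).trans (by omega), fun ρ7 h0 h7 => ?_⟩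
  obtain ⟨u, hu⟩ := hcore ρ7 h0 h7
  set V := bohr (Γ' ∪ Λ) ρ7 with hV
  have hVp : (0:ℝ) < V.card := by exact_mod_cast bohr_card_pos h0
  have hα0 : 0 < α := lt_of_lt_of_le (by positivity) hαL
  have hA1p : (0:ℝ) < A1.card := by
    rw [← hα]
    have : (0:ℝ) < (bohr Γ ρ1).card := lt_of_lt_of_le (by positivity) hbig
    positivity
  have hA1ne : A1.Nonempty := by
    rw [← card_pos]; exact_mod_cast hA1p
  by_contra hcon
  push Not at hcon
  have s1 : ∑ v ∈ V, 65/64*(α*A1.card) * pind (fun u => 65/64*(α*A1.card) ≤ corr (ind A1) u) (u+v)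
      ≤ ∑ v ∈ V, corr (ind A1) (u+v) := by
    refine sum_le_sum fun v _ => ?_
    simp only [pind]
    split_ifs with hh
    · linarith
    · rw [mul_zero]; exact corr_ind_nonneg _ _
  rw [← mul_sum] at s1
  have s2 : ∑ v ∈ V, corr (ind A1) (u+v) = ∑ y ∈ A1, (((V.filter (fun v => (y+u) + v ∈ A1)).card : ℕ) : ℝ) := by
    simp only [corr]
    rw [sum_comm]
    rw [← sum_subset (subset_univ A1)]
    · refine sum_congr rfl fun y hy => ?_
      rw [card_filter]
      push_cast
      refine sum_congr rfl fun v _ => ?_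
      simp [ind, hy, add_assoc]
    · intro y _ hy
      simp [ind, hy]
  have s3 : ∑ y ∈ A1, (((V.filter (fun v => (y+u) + v ∈ A1)).card : ℕ) : ℝ) < ∑ y ∈ A1, 1.011 * α * (V.card:ℝ) :=
    sum_lt_sum_of_nonempty hA1ne fun y _ => hcon (y+u)
  rw [sum_const, nsmul_eq_mul] at s3
  have s4 := mul_le_mul_of_nonneg_left hu (by positivity : 0 ≤ 65/64*(α*A1.card))
  have s5 : 0 < α * A1.card * V.card := by positivity
  rw [s2] at s1
  have s6 := s4.trans s1
  have s7 := lt_of_le_of_lt s6 s3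
  norm_num at s7
  nlinarith

noncomputable def cnt (A V : Finset G) (x : G) : ℝ := (((V.filter (fun v => x + v ∈ A)).card : ℕ) : ℝ)

lemma avg1 (A B Bp B' : Finset G) (x : G) (hsub : ∀ a ∈ B, ∀ b ∈ B', a - b ∈ Bp) :
    cnt A B x * B'.card ≤ ∑ t ∈ Bp, cnt A B' (x + t) := by
  have h1 : ∑ t ∈ Bp, cnt A B' (x + t) = ∑ b ∈ B', ∑ t ∈ Bp, if x + t + b ∈ A then (1:ℝ) else 0 := by
    rw [sum_comm]
    refine sum_congr rfl fun t _ => ?_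
    rw [cnt, card_filter]; push_cast; rfl
  rw [h1, mul_comm, ← nsmul_eq_mul]
  refine card_nsmul_le_sum _ _ _ fun b hb => ?_
  rw [← sum_filter, sum_const, nsmul_eq_mul, mul_one, cnt]
  have : (B.filter (fun v => x + v ∈ A)).card ≤ (Bp.filter (fun t => x + t + b ∈ A)).card := by
    refine card_le_card_of_injOn (fun a => a - b) ?_ ?_
    · intro a ha
      simp only [coe_filter, Set.mem_ofPred_eq] at ha ⊢
      refine ⟨hsub a ha.1 b hb, ?_⟩
      have e : x + (a - b) + b = x + a := by abel
      rw [e]; exact ha.2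
    · intro a _ a' _ h
      simpa using h
  exact_mod_cast this

lemma avg2 (A B Bp B' B'' : Finset G) (x : G) (α : ℝ) (hα : 0 < α) (hsub : ∀ a ∈ B, ∀ b ∈ B', a - b ∈ Bp)
    (hsub2 : ∀ a ∈ B, ∀ b ∈ B'', a - b ∈ Bp) (h1 : B'.Nonempty) (h2 : B''.Nonempty) (hB : B.Nonempty)
    (hreg : (Bp.card:ℝ) ≤ (1+1/500) * B.card) (hA : α * B.card ≤ cnt A B x) :
    ∃ t, 1.996 * α ≤ cnt A B' (x+t) / B'.card + cnt A B'' (x+t) / B''.card := by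
  have hB'p : (0:ℝ) < B'.card := by exact_mod_cast h1.card_pos
  have hB''p : (0:ℝ) < B''.card := by exact_mod_cast h2.card_pos
  have hBp : (0:ℝ) < B.card := by exact_mod_cast hB.card_pos
  by_contra hcon
  push Not at hcon
  have a1 := avg1 A B Bp B' x hsub
  have a2 := avg1 A B Bp B'' x hsub2
  rw [← le_div_iff₀ hB'p] at a1
  rw [← le_div_iff₀ hB''p] at a2
  have a3 : ∑ t ∈ Bp, (cnt A B' (x+t) / B'.card + cnt A B'' (x+t) / B''.card) ≤ Bp.card * (1.996 * α) := by
    rw [← nsmul_eq_mul]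
    exact sum_le_card_nsmul _ _ _ fun t _ => (hcon t).le
  rw [sum_add_distrib, ← sum_div, ← sum_div] at a3
  have a4 := mul_le_mul_of_nonneg_right hreg (by positivity : 0 ≤ 1.996*α)
  have a5 : 0 < α * B.card := by positivity
  norm_num at a3 a4
  nlinarith

def EE (L D : ℕ) : ℕ := (28 * 2^(L+9)) * 28000 * 112 * (1568 * mm (hh L) * nn (hh L) * 2^(hh L+15)) * 14000 * D^6

lemma div_shrink {a b : ℝ} (ha : 0 ≤ a) (hb : 1 ≤ b) : a / b ≤ a := div_le_self ha hb

lemma EE_le (L d D : ℕ) (κ : ℝ) (hκ : 0 < κ) (hd : 1 ≤ d) (hdD : d ≤ D) :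
    κ / EE L D ≤ κ/(28*d*((2^(L+9) : ℕ):ℝ))/2/(28*d*((500:ℕ):ℝ))/(112*d)/(1568 * mm (hh L) * d ^ 2 * nn (hh L) * 2 ^ (hh L + 15))/(28*D*((500:ℕ):ℝ)) := by
  have hm : (0:ℝ) < mm (hh L) := by unfold mm; positivity
  have hn : (0:ℝ) < nn (hh L) := by unfold nn; positivity
  have hdp : (0:ℝ) < d := by exact_mod_cast hd
  have hD : (d:ℝ) ≤ D := by exact_mod_cast hdD
  have hDp : (0:ℝ) < D := by linarith
  simp only [div_div]
  refine div_le_div_of_nonneg_left hκ.le (by positivity) ?_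
  unfold EE
  generalize mm (hh L) = m at *
  generalize nn (hh L) = n at *
  generalize hh L + 15 = h at *
  push_cast
  have : (d:ℝ)^5 * D ≤ D^5 * D := by gcongr
  have k := mul_le_mul_of_nonneg_left this (by positivity : (0:ℝ) ≤ (28 * 2^(L+9)) * 28000 * 112 * (1568 * m * n * 2^h) * 14000)
  refine le_trans (le_of_eq ?_) (k.trans (le_of_eq ?_)) <;> ring

set_option maxHeartbeats 1000000 in
lemma step (A : Finset G) (h2 : Function.Injective (fun x : G => x + x))
    (hAP : ∀ x ∈ A, ∀ y ∈ A, ∀ z ∈ A, x + y = z + z → x = y)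
    (Γ : Finset (AddChar G ℂ)) (d : ℕ) (hd : Γ.card ≤ d) (hd1 : 1 ≤ d) (L D : ℕ) (hD : d + nn (hh L) ≤ D)
    (ρ κ α : ℝ) (x : G) (hρ : 0 ≤ ρ) (hκ : 0 < κ) (hκ2 : κ ≤ 2)
    (hreg : ((bohr Γ (ρ + κ)).card:ℝ) ≤ (1+1/500) * (bohr Γ ρ).card)
    (hα : α * (bohr Γ ρ).card ≤ cnt A (bohr Γ ρ) x) (hαL : 1/2^L ≤ α)
    (hbig : (4:ℝ) * 4^(L+1) ≤ (bohr Γ (κ / EE L D)).card) :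
    ∃ (Γ2 : Finset (AddChar G ℂ)) (ρ' : ℝ) (x' : G), Γ2.card ≤ d + nn (hh L) ∧ 0 ≤ ρ' ∧
      ((bohr Γ2 (ρ' + κ / EE L D)).card:ℝ) ≤ (1+1/500) * (bohr Γ2 ρ').card ∧
      (1+1/500) * α * (bohr Γ2 ρ').card ≤ cnt A (bohr Γ2 ρ') x' := by
  have hEE := EE_le L d D κ hκ hd1 (by omega)
  have hm : (1:ℝ) ≤ mm (hh L) := by
    have : 1 ≤ mm (hh L) := by unfold mm; omega
    exact_mod_cast this
  have hn : (1:ℝ) ≤ nn (hh L) := by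
    have : 1 ≤ nn (hh L) := by unfold nn; omega
    exact_mod_cast this
  have hdR : (1:ℝ) ≤ d := by exact_mod_cast hd1
  have hD1 : 1 ≤ D := by omega
  have hDR : (1:ℝ) ≤ D := by exact_mod_cast hD1
  have hα0 : 0 < α := lt_of_lt_of_le (by positivity) hαL
  obtain ⟨κ', hκ'⟩ : ∃ κ', κ' = κ / EE L D := ⟨_, rfl⟩
  rw [← hκ'] at hEE hbig ⊢
  have hp2 : (1:ℕ) ≤ 2^(L+9) := Nat.one_le_two_pow
  obtain ⟨ρ1, -, hr12, hr13, hr14⟩ := exists_regular Γ hd hd1 hp2 hκ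
  obtain ⟨κ1, hκ1⟩ : ∃ κ1, κ1 = κ/(28*d*((2^(L+9) : ℕ):ℝ)) := ⟨_, rfl⟩
  rw [← hκ1] at hr13 hr14 hEE
  have hκ1p : 0 < κ1 := by rw [hκ1]; positivity
  have hκ1l : κ1 ≤ κ := by
    rw [hκ1]; refine div_shrink hκ.le ?_
    have : (1:ℝ) ≤ ((2^(L+9) : ℕ):ℝ) := by exact_mod_cast hp2
    nlinarith
  obtain ⟨ρ2, -, hr22, hr23, hr24⟩ := exists_regular Γ hd hd1 (by norm_num : 1 ≤ 500) (by positivity : 0 < κ1/2)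
  obtain ⟨κ2, hκ2'⟩ : ∃ κ2, κ2 = κ1/2/(28*d*((500:ℕ):ℝ)) := ⟨_, rfl⟩
  rw [← hκ2'] at hr23 hr24 hEE
  have hκ2p : 0 < κ2 := by rw [hκ2']; positivity
  have hκ2l : κ2 ≤ κ1/2 := by
    rw [hκ2']; refine div_shrink (by positivity) ?_
    push_cast; linarith
  obtain ⟨σ, hσ⟩ : ∃ σ, σ = κ2/(112*d)/(1568 * mm (hh L) * d ^ 2 * nn (hh L) * 2 ^ (hh L + 15)) := ⟨_, rfl⟩
  rw [← hσ] at hEE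
  have hσp : 0 < σ := by rw [hσ]; positivity
  have hσl : σ ≤ κ2 := by
    rw [hσ, div_div]; refine div_shrink (by positivity) ?_
    have : (1:ℝ) ≤ 2 ^ (hh L + 15) := one_le_pow₀ (by norm_num)
    have h1 : (1:ℝ) ≤ 1568 * mm (hh L) := by linarith
    have h2 : (1:ℝ) ≤ d^2 := one_le_pow₀ hdR
    have h3 := one_le_mul_of_one_le_of_one_le (one_le_mul_of_one_le_of_one_le (one_le_mul_of_one_le_of_one_le h1 h2) hn) this
    exact one_le_mul_of_one_le_of_one_le (by linarith) h3
  have hκ'l : κ' ≤ σ := by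
    refine hEE.trans (div_shrink hσp.le ?_)
    push_cast; linarith
  have hreg2' : ((bohr Γ (ρ2 + κ2)).card:ℝ) ≤ (1+1/500) * (bohr Γ ρ2).card := by
    refine hr24.trans ?_
    have := bohr_card_mono Γ (by linarith : ρ2 - κ2 ≤ ρ2)
    push_cast; gcongr
  have hreg1' : ((bohr Γ (ρ1 + κ1)).card:ℝ) ≤ (1+1/2^(L+9)) * (bohr Γ (ρ1 - κ1)).card := by
    push_cast at hr14; exact hr14
  have h512 : (1:ℝ)/2^(L+9) ≤ 1/500 := by
    refine one_div_le_one_div_of_le (by norm_num) ?_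
    have : (2:ℝ)^9 ≤ 2^(L+9) := pow_le_pow_right₀ (by norm_num) (by omega)
    norm_num at this; linarith
  obtain ⟨t, ht⟩ := avg2 A (bohr Γ ρ) (bohr Γ (ρ+κ)) (bohr Γ ρ1) (bohr Γ ρ2) x α hα0
    (fun a ha b hb => bohr_mono (by linarith) (bohr_sub ha hb))
    (fun a ha b hb => bohr_mono (by linarith) (bohr_sub ha hb))
    ⟨0, bohr_zero_mem (by linarith)⟩ ⟨0, bohr_zero_mem (by linarith)⟩ ⟨0, bohr_zero_mem (by linarith)⟩ hreg hα
  have hB1 : (0:ℝ) < (bohr Γ ρ1).card := by exact_mod_cast bohr_card_pos (by linarith)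
  have hB2 : (0:ℝ) < (bohr Γ ρ2).card := by exact_mod_cast bohr_card_pos (by linarith)
  obtain ⟨α1, hα1⟩ : ∃ α1, α1 = cnt A (bohr Γ ρ1) (x+t) / (bohr Γ ρ1).card := ⟨_, rfl⟩
  obtain ⟨α2, hα2⟩ : ∃ α2, α2 = cnt A (bohr Γ ρ2) (x+t) / (bohr Γ ρ2).card := ⟨_, rfl⟩
  rw [← hα1, ← hα2] at ht
  have hα1' : α1 * (bohr Γ ρ1).card = cnt A (bohr Γ ρ1) (x+t) := by rw [hα1]; field_simp
  have hα2' : α2 * (bohr Γ ρ2).card = cnt A (bohr Γ ρ2) (x+t) := by rw [hα2]; field_simp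
  by_cases hc1 : (1+1/500) * α ≤ α1
  · refine ⟨Γ, ρ1, x + t, by omega, by linarith, ?_, ?_⟩
    · refine (bohr_card_mono Γ (by linarith : ρ1 + κ' ≤ ρ1 + κ1)).trans (hreg1'.trans ?_)
      have := bohr_card_mono Γ (by linarith : ρ1 - κ1 ≤ ρ1)
      gcongr
    · rw [← hα1']; gcongr
  by_cases hc2 : (1+1/500) * α ≤ α2
  · refine ⟨Γ, ρ2, x + t, by omega, by linarith, ?_, ?_⟩
    · exact (bohr_card_mono Γ (by linarith : ρ2 + κ' ≤ ρ2 + κ2)).trans hreg2'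
    · rw [← hα2']; gcongr
  push Not at hc1 hc2
  have hα1l : 0.994 * α ≤ α1 := by norm_num at ht ⊢; linarith
  have hα2l : 0.994 * α ≤ α2 := by norm_num at ht ⊢; linarith
  have hhalf : 1/2^(L+1) ≤ 0.994 * α := by
    have : (1:ℝ)/2^(L+1) = 1/2^L/2 := by rw [pow_succ]; field_simp
    rw [this]; norm_num at hαL ⊢; linarith
  set At : Finset G := univ.filter (fun v => x + t + v ∈ A) with hAt
  have hcnt : ∀ B : Finset G, (((At ∩ B).card : ℕ) : ℝ) = cnt A B (x + t) := by
    intro B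
    rw [cnt]
    congr 2
    ext v; simp [hAt, and_comm]
  have hAPt : ∀ a ∈ At, ∀ b ∈ At, ∀ c ∈ At, a + b = c + c → a = b := by
    intro a ha b hb c hc h
    simp only [hAt, mem_filter, mem_univ, true_and] at ha hb hc
    have := hAP _ ha _ hb _ hc (by
      calc x + t + a + (x + t + b) = (x + t) + (x + t) + (a + b) := by abel
        _ = (x + t) + (x + t) + (c + c) := by rw [h]
        _ = _ := by abel)
    simpa using this
  obtain ⟨Γ2, hΓ2c, hinc⟩ := incr1 At h2 hAPt Γ d hd hd1 L ρ1 κ1 ρ2 κ2 hκ1p.le (by linarith) (by linarith)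
    (by linarith) hκ2p (by linarith) (by linarith)
    ((bohr_card_mono Γ (by linarith : ρ1 ≤ ρ1 + κ1)).trans hreg1')
    (hreg2'.trans (by gcongr; norm_num))
    (At ∩ bohr Γ ρ1) rfl α1 (by rw [hα1', hcnt]) (by linarith)
    (by rw [hcnt, ← hα2']; gcongr; linarith)
    (hbig.trans (bohr_card_mono Γ (by linarith)))
  rw [← hσ] at hinc
  obtain ⟨ρ7, -, hr72, hr73, hr74⟩ := exists_regular Γ2 (hΓ2c.trans hD) hD1 (by norm_num : 1 ≤ 500) hσp
  have hκ'p : 0 ≤ σ / (28 * D * ((500:ℕ):ℝ)) := by positivity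
  obtain ⟨y, hy⟩ := hinc ρ7 (hκ'p.trans hr73) hr72
  refine ⟨Γ2, ρ7, x + t + y, hΓ2c, hκ'p.trans hr73, ?_, ?_⟩
  · refine (bohr_card_mono Γ2 (by linarith : ρ7 + κ' ≤ ρ7 + σ / (28 * D * ((500:ℕ):ℝ)))).trans (hr74.trans ?_)
    have := bohr_card_mono Γ2 (by linarith : ρ7 - σ / (28 * D * ((500:ℕ):ℝ)) ≤ ρ7)
    push_cast at this ⊢; gcongr
  · have s1 : ((((bohr Γ2 ρ7).filter (fun v => y + v ∈ At ∩ bohr Γ ρ1)).card : ℕ) : ℝ) ≤ cnt A (bohr Γ2 ρ7) (x + t + y) := by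
      rw [cnt]
      refine Nat.cast_le.2 (card_le_card ?_)
      intro v hv
      simp only [hAt, mem_filter, mem_inter, mem_univ, true_and] at hv ⊢
      exact ⟨hv.1, by rw [add_assoc]; exact hv.2.1⟩
    refine le_trans ?_ (hy.trans s1)
    refine mul_le_mul_of_nonneg_right ?_ (Nat.cast_nonneg _)
    norm_num at hα1l ⊢; linarith
end KM
end

section
open Finset
open scoped Classical
namespace KM
set_option linter.unusedSectionVars false
variable {G : Type*} [AddCommGroup G] [Fintype G]

def JJ (L : ℕ) : ℕ := 500 * L + 1
def DD (L : ℕ) : ℕ := 1 + JJ L * nn (hh L)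
def ee (L : ℕ) : ℕ := L + 76 + mm (hh L) + nn (hh L) + hh L + 6 * DD L
def FF (L : ℕ) : ℕ := 2 * L + 4 + 7 * (DD L * (ee L * JJ L + 1))

lemma EE_le_pow (L : ℕ) : EE L (DD L) ≤ 2 ^ ee L := by
  have hm : mm (hh L) ≤ 2 ^ (mm (hh L)) := Nat.lt_two_pow_self.le
  have hn : nn (hh L) ≤ 2 ^ (nn (hh L)) := Nat.lt_two_pow_self.le
  have hD : DD L ≤ 2 ^ (DD L) := Nat.lt_two_pow_self.le
  unfold EE ee
  generalize mm (hh L) = m at *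
  generalize nn (hh L) = n at *
  generalize hh L = h at *
  generalize DD L = D at *
  calc 28 * 2 ^ (L + 9) * 28000 * 112 * (1568 * m * n * 2 ^ (h + 15)) * 14000 * D ^ 6
      ≤ 2^5 * 2^(L+9) * 2^15 * 2^7 * (2^11 * 2^m * 2^n * 2^(h+15)) * 2^14 * (2^D)^6 := by
        gcongr <;> norm_num
    _ = 2 ^ (L + 76 + m + n + h + 6 * D) := by
        rw [← pow_mul]; simp only [← pow_add]; congr 1; ring

lemma EE_pos (L : ℕ) : 0 < EE L (DD L) := by
  unfold EE mm nn DD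
  positivity

lemma big0 (L E D J e : ℕ) (hEl : E ≤ 2 ^ e) (hEp : 0 < E) (hG : 2 ^ (2 * L + 4 + 7 * (D * (e * J + 1))) ≤ Fintype.card G)
    (Γ : Finset (AddChar G ℂ)) (hΓ : Γ.card ≤ D) :
    (4:ℝ) * 4^(L+1) ≤ (bohr Γ (1 / (E : ℝ)^J)).card := by
  have h1 := bohr_card_lower Γ hΓ (e * J + 1)
  have h2 : (2:ℝ) / 2^(e * J + 1) ≤ 1 / (E : ℝ)^(J) := by
    have hE : (E : ℝ) ≤ 2 ^ e := by exact_mod_cast hEl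
    have hE0 : (0:ℝ) < E := by exact_mod_cast hEp
    have ex : (2:ℝ) / 2^(e * J + 1) = 1 / (2 ^ e)^(J) := by
      rw [pow_succ, pow_mul]; field_simp
    rw [ex]
    exact one_div_le_one_div_of_le (by positivity) (by gcongr)
  refine le_trans ?_ (bohr_card_mono Γ h2)
  set b := (bohr Γ (2 / 2^(e * J + 1))).card
  have h3 : 81 ^ (D * (e * J + 1)) ≤ 2 ^ (7 * (D * (e * J + 1))) := by
    rw [pow_mul 2 7]; exact Nat.pow_le_pow_left (by norm_num) _
  have h4 : 2 ^ (2 * L + 4) * 2 ^ (7 * (D * (e * J + 1))) ≤ b * 2 ^ (7 * (D * (e * J + 1))) := by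
    rw [← pow_add]
    refine (hG.trans h1).trans ?_
    rw [mul_comm]
    gcongr
  have h5 : 2 ^ (2 * L + 4) ≤ b := Nat.le_of_mul_le_mul_right h4 (by positivity)
  have h6 : 4 * 4^(L+1) = 2 ^ (2 * L + 4) := by
    rw [show (4:ℕ) = 2^2 by norm_num, ← pow_mul, ← pow_add]; congr 1; ring
  rw [← h6] at h5
  exact_mod_cast h5

lemma big (L : ℕ) (hG : 2 ^ FF L ≤ Fintype.card G) (Γ : Finset (AddChar G ℂ)) (hΓ : Γ.card ≤ DD L) :
    (4:ℝ) * 4^(L+1) ≤ (bohr Γ (1 / (EE L (DD L) : ℝ)^(JJ L))).card :=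
  big0 L _ _ _ _ (EE_le_pow L) (EE_pos L) hG Γ hΓ

lemma iter (A : Finset G) (h2 : Function.Injective (fun x : G => x + x))
    (hAP : ∀ x ∈ A, ∀ y ∈ A, ∀ z ∈ A, x + y = z + z → x = y) (L : ℕ) (hG : 2 ^ FF L ≤ Fintype.card G)
    (hA : Fintype.card G ≤ 2 ^ L * A.card) (j : ℕ) (hj : j ≤ JJ L) :
    ∃ (Γ : Finset (AddChar G ℂ)) (ρ : ℝ) (x : G), Γ.card ≤ 1 + j * nn (hh L) ∧ 0 ≤ ρ ∧
      ((bohr Γ (ρ + 1 / (EE L (DD L) : ℝ)^j)).card:ℝ) ≤ (1+1/500) * (bohr Γ ρ).card ∧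
      (1+1/500)^j / 2^L * (bohr Γ ρ).card ≤ cnt A (bohr Γ ρ) x := by
  have hbig := fun Γ => big L hG Γ
  have hstep := fun Γ d hd hd1 hD => step A h2 hAP Γ d hd hd1 L (DD L) hD
  have hE1n := EE_pos L
  have hDD : ∀ j, j + 1 ≤ JJ L → 1 + j * nn (hh L) + nn (hh L) ≤ DD L := by
    intro j hj
    unfold DD
    have : (j + 1) * nn (hh L) ≤ JJ L * nn (hh L) := Nat.mul_le_mul_right _ hj
    rw [add_mul, one_mul] at this
    omega
  clear hG
  generalize EE L (DD L) = E at *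
  generalize DD L = D at *
  generalize JJ L = J at *
  generalize nn (hh L) = n at *
  have hE0 : (0:ℝ) < E := by exact_mod_cast hE1n
  have hE1 : (1:ℝ) ≤ E := by exact_mod_cast hE1n
  induction j with
  | zero =>
    have hu : ∀ ρ, bohr (∅ : Finset (AddChar G ℂ)) ρ = univ := fun ρ => by ext x; simp [mem_bohr]
    refine ⟨∅, 0, 0, by simp, le_rfl, ?_, ?_⟩
    · rw [hu, hu]
      have : (0:ℝ) ≤ (univ : Finset G).card := Nat.cast_nonneg _
      linarith
    · rw [hu]
      have : cnt A univ 0 = A.card := by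
        rw [cnt]; congr 2; ext; simp
      rw [this, pow_zero, div_mul_eq_mul_div, div_le_iff₀ (by positivity), one_mul, card_univ]
      rw [mul_comm] at hA
      exact_mod_cast hA
  | succ j ih =>
    obtain ⟨Γ, ρ, x, hc, hρ, hreg, hα⟩ := ih (by omega)
    have hDD := hDD j hj
    have e : (1:ℝ) / (E : ℝ)^(j+1) = 1 / (E : ℝ)^j / E := by
      rw [pow_succ, div_div]
    obtain ⟨Γ2, ρ', x', k1, k2, k3, k4⟩ := hstep Γ (1 + j * n) hc (by omega) hDD ρ
      (1 / (E : ℝ)^j) ((1+1/500)^j / 2^L) x hρ (by positivity) (by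
        rw [div_le_iff₀ (by positivity)]
        have : (1:ℝ) ≤ (E : ℝ)^j := one_le_pow₀ hE1
        linarith) hreg hα (by
        gcongr
        exact one_le_pow₀ (by norm_num)) (by
        rw [← e]
        refine (hbig Γ (by omega)).trans (bohr_card_mono Γ ?_)
        exact one_div_le_one_div_of_le (by positivity) (pow_le_pow_right₀ hE1 hj))
    refine ⟨Γ2, ρ', x', by rw [add_mul, one_mul]; omega, k2, by rw [e]; exact k3, ?_⟩
    refine le_trans (le_of_eq ?_) k4
    rw [pow_succ]; ring

theorem main_group (A : Finset G) (h2 : Function.Injective (fun x : G => x + x))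
    (hAP : ∀ x ∈ A, ∀ y ∈ A, ∀ z ∈ A, x + y = z + z → x = y) (L : ℕ) (hG : 2 ^ FF L ≤ Fintype.card G) :
    2 ^ L * A.card < Fintype.card G := by
  by_contra hcon
  push Not at hcon
  obtain ⟨Γ, ρ, x, -, hρ, -, hα⟩ := iter A h2 hAP L hG hcon (JJ L) le_rfl
  have h1 : cnt A (bohr Γ ρ) x ≤ (bohr Γ ρ).card := by
    rw [cnt]; exact Nat.cast_le.2 (card_filter_le _ _)
  have h0 : (0:ℝ) < (bohr Γ ρ).card := by exact_mod_cast bohr_card_pos hρ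
  have h3 : (1+1/500:ℝ)^(JJ L) / 2^L ≤ 1 := by
    by_contra h
    push Not at h
    have := mul_lt_mul_of_pos_right h h0
    linarith
  rw [div_le_one (by positivity), JJ, pow_succ, pow_mul] at h3
  have h4 : (2:ℝ) ≤ (1+1/500)^500 := by
    have := one_add_mul_le_pow (by norm_num : (-2:ℝ) ≤ 1/500) 500
    refine le_trans ?_ this
    norm_num
  have h5 : (2:ℝ)^L ≤ ((1+1/500)^500)^L := by gcongr
  have h6 : (0:ℝ) < 2^L := by positivity
  linarith

lemma interval (k L : ℕ) (S : Finset ℕ) (hS : ∀ x ∈ S, x < 2^(k+1))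
    (hAP : ∀ x ∈ S, ∀ y ∈ S, ∀ z ∈ S, x + y = 2 * z → x = y) (hF : FF L ≤ k + 2) :
    2 ^ L * S.card ≤ 2 ^ (k+2) := by
  obtain ⟨N, hN⟩ : ∃ N, N = 2^(k+2) + 1 := ⟨_, rfl⟩
  have : NeZero N := ⟨by rw [hN]; exact Nat.succ_ne_zero _⟩
  have hk : 2^(k+2) = 2 * 2^(k+1) := by ring
  have hinj : ∀ a b : ℕ, a < N → b < N → (a : ZMod N) = b → a = b := by
    intro a b ha hb h
    rw [ZMod.natCast_eq_natCast_iff] at h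
    exact Nat.ModEq.eq_of_lt_of_lt h ha hb
  have h2 : Function.Injective (fun x : ZMod N => x + x) := by
    have key : ∀ x : ZMod N, ((2^(k+1) + 1 : ℕ) : ZMod N) * (x + x) = x := by
      intro x
      have : ((2^(k+1) + 1 : ℕ) : ZMod N) * (x + x) = ((N + 1 : ℕ) : ZMod N) * x := by
        rw [← two_mul, ← mul_assoc]; congr 1
        rw [hN, hk]; push_cast; ring
      rw [this]; simp
    intro x y h
    simp only at h
    rw [← key x, ← key y, h]
  have hcard : (S.image (fun n : ℕ => (n : ZMod N))).card = S.card := by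
    refine card_image_of_injOn fun a ha b hb h => hinj a b ?_ ?_ h
    · have := hS a ha; omega
    · have := hS b hb; omega
  have := main_group (S.image (fun n : ℕ => (n : ZMod N))) h2 (by
    intro x hx y hy z hz h
    obtain ⟨a, ha, rfl⟩ := mem_image.1 hx
    obtain ⟨b, hb, rfl⟩ := mem_image.1 hy
    obtain ⟨c, hc, rfl⟩ := mem_image.1 hz
    have e : a + b = c + c := by
      have := hS a ha
      have := hS b hb
      have := hS c hc
      refine hinj _ _ (by omega) (by omega) ?_
      push_cast; exact h
    rw [hAP a ha b hb c hc (by omega)]) L (by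
    rw [ZMod.card]
    have := Nat.pow_le_pow_right (by norm_num : 0 < 2) hF
    omega)
  rw [hcard, ZMod.card] at this
  omega

def PB (f : ℕ → ℕ) : Prop := ∃ C K, ∀ L, f L ≤ C * (L+1)^K

lemma PB.const (c : ℕ) : PB (fun _ => c) := ⟨c, 0, fun L => by simp⟩
lemma PB.id' : PB (fun L => L) := ⟨1, 1, fun L => by simp⟩
lemma PB.add {f g : ℕ → ℕ} (hf : PB f) (hg : PB g) : PB (fun L => f L + g L) := by
  obtain ⟨C, K, h⟩ := hf
  obtain ⟨C', K', h'⟩ := hg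
  refine ⟨C + C', K + K', fun L => ?_⟩
  have a : (L+1)^K ≤ (L+1)^(K+K') := Nat.pow_le_pow_right (by omega) (by omega)
  have b : (L+1)^K' ≤ (L+1)^(K+K') := Nat.pow_le_pow_right (by omega) (by omega)
  have := h L
  have := h' L
  rw [add_mul]
  show f L + g L ≤ _
  have := Nat.mul_le_mul_left C a
  have := Nat.mul_le_mul_left C' b
  omega
lemma PB.mul {f g : ℕ → ℕ} (hf : PB f) (hg : PB g) : PB (fun L => f L * g L) := by
  obtain ⟨C, K, h⟩ := hf
  obtain ⟨C', K', h'⟩ := hg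
  refine ⟨C * C', K + K', fun L => ?_⟩
  refine (Nat.mul_le_mul (h L) (h' L)).trans (le_of_eq ?_)
  ring

lemma PB_FF : PB FF := by
  have hpp : PB pp := (PB.const 2).mul (PB.id'.add (PB.const 2))
  have hqq : PB qq := (PB.const 33).mul ((PB.const 19).add ((PB.const 4).mul hpp))
  have hhh : PB hh := ((PB.id'.add (PB.const 1)).mul hqq).add (PB.const 2)
  have hmm : PB (fun L => mm (hh L)) := hhh.add (PB.const 13)
  have hkk : PB (fun L => kk (hh L)) := by
    have := ((PB.const 64000000).mul (hmm.mul hmm)).mul ((hhh.add (PB.const 15)).add hmm)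
    simpa only [kk, sq] using this
  have htt : PB (fun L => tt (hh L)) := ((hhh.add (PB.const 1)).mul hkk).add (PB.const 1)
  have hnn : PB (fun L => nn (hh L)) := (PB.const 8).mul (htt.add (PB.const 3))
  have hJJ : PB JJ := ((PB.const 500).mul PB.id').add (PB.const 1)
  have hDD : PB DD := (PB.const 1).add (hJJ.mul hnn)
  have hee : PB ee := ((((PB.id'.add (PB.const 76)).add hmm).add hnn).add hhh).add ((PB.const 6).mul hDD)
  exact (((PB.const 2).mul PB.id').add (PB.const 4)).add ((PB.const 7).mul (hDD.mul ((hee.mul hJJ).add (PB.const 1))))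

lemma FF_log : ∃ k0, ∀ k ≥ k0, FF (2 * Nat.log 2 k) ≤ k := by
  obtain ⟨C, K, h⟩ := PB_FF
  have ht := tendsto_pow_const_div_const_pow_of_one_lt K (by norm_num : (1:ℝ) < 2)
  have hev := ht.eventually (gt_mem_nhds (by positivity : (0:ℝ) < 1 / ((C+1) * 3^K)))
  obtain ⟨l0, hl0⟩ := Filter.eventually_atTop.1 hev
  refine ⟨2^(l0+1), fun k hk => ?_⟩
  have hk0 : k ≠ 0 := by have : 0 < 2^(l0+1) := by positivity
                         omega
  set l := Nat.log 2 k with hl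
  have hll : l0 + 1 ≤ l := (Nat.le_log_iff_pow_le (by norm_num) hk0).2 hk
  have h1 := hl0 l (by omega)
  have h2 : 2^l ≤ k := Nat.pow_log_le_self 2 hk0
  refine le_trans ?_ h2
  refine (h _).trans ?_
  have h3 : 2 * l + 1 ≤ 3 * l := by omega
  have h4 : C * (2 * l + 1)^K ≤ C * (3*l)^K := by gcongr
  refine h4.trans ?_
  rw [div_lt_div_iff₀ (by positivity) (by positivity), one_mul] at h1
  have h5 : ((C * (3*l)^K : ℕ) : ℝ) ≤ ((2^l : ℕ) : ℝ) := by
    push_cast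
    rw [mul_pow]
    have : (0:ℝ) ≤ 3^K * l^K := by positivity
    nlinarith
  exact_mod_cast h5

lemma block (A : Set ℕ) (k : ℕ) (hk : 1 ≤ k) (hF : FF (2 * Nat.log 2 k) ≤ k)
    (hAP : ∀ x ∈ A, ∀ y ∈ A, ∀ z ∈ A, 2^k ≤ x → x + y = 2 * z → x = y) :
    ∑ n ∈ Finset.Ico (2^k) (2^(k+1)), (if n ∈ A then (1 : ℝ) / n else 0) ≤ 16 * (1 / (k:ℝ)^2) := by
  set S := (Finset.Ico (2^k) (2^(k+1))).filter (· ∈ A) with hS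
  have h1 := interval k (2 * Nat.log 2 k) S (fun x hx => by
    simp only [hS, mem_filter, mem_Ico] at hx; exact hx.1.2) (by
    intro x hx y hy z hz h
    simp only [hS, mem_filter, mem_Ico] at hx hy hz
    exact hAP x hx.2 y hy.2 z hz.2 hx.1.1 h) (by omega)
  rw [← sum_filter]
  have h2 : ∑ n ∈ S, (1:ℝ)/n ≤ S.card * (1/2^k) := by
    rw [← nsmul_eq_mul]
    refine sum_le_card_nsmul _ _ _ fun n hn => ?_
    simp only [hS, mem_filter, mem_Ico] at hn
    refine one_div_le_one_div_of_le (by positivity) ?_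
    exact_mod_cast hn.1.1
  refine h2.trans ?_
  have h3 : k < 2^(Nat.log 2 k + 1) := Nat.lt_pow_succ_log_self (by norm_num) k
  obtain ⟨l, hl⟩ : ∃ l, l = Nat.log 2 k := ⟨_, rfl⟩
  rw [← hl] at h1 h3
  have h3' : (k:ℝ) ≤ 2 * 2^l := by
    have : (k:ℝ) < 2^(l+1) := by exact_mod_cast h3
    rw [pow_succ] at this; linarith
  have h1' : (2:ℝ)^(2*l) * S.card ≤ 4 * 2^k := by
    have : (2:ℝ)^(2*l) * S.card ≤ 2^(k+2) := by exact_mod_cast h1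
    rw [pow_add] at this; linarith
  have hkp : (0:ℝ) < k := by exact_mod_cast hk
  have h4 : (k:ℝ)^2 ≤ 4 * 2^(2*l) := by
    have : (k:ℝ)^2 ≤ (2 * 2^l)^2 := by gcongr
    rw [mul_pow, ← pow_mul, mul_comm l 2] at this
    linarith
  rw [mul_one_div, mul_one_div, div_le_div_iff₀ (by positivity) (by positivity)]
  have h5 : (S.card:ℝ) * k^2 ≤ S.card * (4 * 2^(2*l)) := by gcongr
  linarith

theorem final (A : Set ℕ)
    (hdiv : ∀ M : ℝ, ∃ N : ℕ,
      M ≤ ∑ n ∈ Finset.range (N + 1), (if n ∈ A then (1 : ℝ) / n else 0)) :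
    {p : ℕ × ℕ × ℕ |
      p.1 ∈ A ∧ p.2.1 ∈ A ∧ p.2.2 ∈ A ∧ p.1 + p.2.1 = 2 * p.2.2 ∧ p.1 ≠ p.2.1}.Infinite := by
  intro hfin
  obtain ⟨M0, hM0⟩ := (hfin.image Prod.fst).bddAbove
  obtain ⟨k1, hk1⟩ := FF_log
  obtain ⟨k0, hk0⟩ : ∃ k0, k0 = k1 + M0 + 1 := ⟨_, rfl⟩
  have hAP : ∀ k ≥ k0, ∀ x ∈ A, ∀ y ∈ A, ∀ z ∈ A, 2^k ≤ x → x + y = 2 * z → x = y := by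
    intro k hk x hx y hy z hz hkx h
    by_contra hne
    have h1 : x ≤ M0 := hM0 ⟨(x, y, z), ⟨hx, hy, hz, h, hne⟩, rfl⟩
    have : k < 2^k := Nat.lt_two_pow_self
    omega
  set F : ℕ → ℝ := fun n => if n ∈ A then (1 : ℝ) / n else 0 with hFdef
  have hF0 : ∀ n, 0 ≤ F n := fun n => by simp only [hFdef]; split_ifs <;> positivity
  have hsum : Summable (fun k : ℕ => 1 / (k:ℝ)^2) := Real.summable_one_div_nat_pow.2 (by norm_num)
  have hind : ∀ j, ∑ n ∈ range (2^(k0+j)), F n ≤ ∑ n ∈ range (2^k0), F n + 16 * ∑ k ∈ range (k0+j), 1/(k:ℝ)^2 := by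
    intro j
    induction j with
    | zero =>
      have : (0:ℝ) ≤ ∑ k ∈ range (k0+0), 1/(k:ℝ)^2 := sum_nonneg fun _ _ => by positivity
      simp only [add_zero] at this ⊢
      linarith
    | succ j ih =>
      have e : ∑ n ∈ range (2^(k0+(j+1))), F n = ∑ n ∈ range (2^(k0+j)), F n + ∑ n ∈ Ico (2^(k0+j)) (2^(k0+j+1)), F n := by
        rw [sum_range_add_sum_Ico]
        · rfl
        · exact Nat.pow_le_pow_right (by norm_num) (by omega)
      have b := block A (k0+j) (by omega) (hk1 _ (by omega)) (hAP _ (by omega))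
      rw [e, ← add_assoc, sum_range_succ, mul_add]
      linarith
  obtain ⟨N, hN⟩ := hdiv (∑ n ∈ range (2^k0), F n + 16 * ∑' k : ℕ, 1/(k:ℝ)^2 + 1)
  have h1 : ∑ n ∈ range (N+1), F n ≤ ∑ n ∈ range (2^(k0+(N+1))), F n := by
    refine sum_le_sum_of_subset_of_nonneg ?_ fun n _ _ => hF0 n
    refine range_subset_range.2 ?_
    have : k0 + (N+1) < 2^(k0+(N+1)) := Nat.lt_two_pow_self
    omega
  have h2 := hind (N+1)
  have h3 : ∑ k ∈ range (k0+(N+1)), 1/(k:ℝ)^2 ≤ ∑' k : ℕ, 1/(k:ℝ)^2 :=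
    hsum.sum_le_tsum _ fun _ _ => by positivity
  linarith
end KM
end

open scoped Classical in
/-- **The first non-trivial case of Erdős's conjecture on arithmetic progressions.**
If `A` is a set of positive integers whose sum of reciprocals diverges (i.e. the
partial sums `∑_{n ∈ A, n ≤ N} 1/n` are unbounded), then `A` contains infinitely
many non-trivial three-term arithmetic progressions. -/
theorem erdos_ap_first_case (A : Set ℕ) (hpos : ∀ n ∈ A, 0 < n)
    (hdiv : ∀ M : ℝ, ∃ N : ℕ,
      M ≤ ∑ n ∈ Finset.range (N + 1), (if n ∈ A then (1 : ℝ) / n else 0)) :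
    {p : ℕ × ℕ × ℕ |
      p.1 ∈ A ∧ p.2.1 ∈ A ∧ p.2.2 ∈ A ∧ p.1 + p.2.1 = 2 * p.2.2 ∧ p.1 ≠ p.2.1}.Infinite := by
  exact KM.final A hdiv
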